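/- arXiv:1108.2354 — 2 statements merged into one kernel-verified Lean document; each statement's English description precedes it below -/
import Mathlib

section
/- Let T be a tree and let (A_n)_{n≥0} be a decreasing sequence of connected subsets of T (A_{n+1} ⊆ A_n). Then the intersection ⋂_{n≥0} A_n is either connected or empty. -/
open Set Filter Metric Topology TopologicalSpace

/-- An arc: a subset homeomorphic to `[0,1]`. -/
def IsArc {T : Type*} [TopologicalSpace T] (A : Set T) : Prop :=
  Nonempty (↥(Set.Icc (0:ℝ) 1) ≃ₜ ↥A)

/-- An arc with endpoints `x` and `y`. -/
def IsArcBetween {T : Type*} [TopologicalSpace T] (A : Set T) (x y : T) : Prop :=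
  ∃ e : ↥(Set.Icc (0:ℝ) 1) ≃ₜ ↥A,
    ((e ⟨0, by norm_num⟩ : ↥A) : T) = x ∧ ((e ⟨1, by norm_num⟩ : ↥A) : T) = y

/-- A tree: a continuum which is uniquely arcwise connected and is a point or a
union of finitely many arcs. -/
structure IsTreeSpace (T : Type*) [MetricSpace T] : Prop where
  compact : CompactSpace T
  conn : ConnectedSpace T
  uniqueArc : ∀ x y : T, x ≠ y → ∃! A : Set T, IsArcBetween A x y
  finiteArcs : (∃ x : T, (Set.univ : Set T) = {x}) ∨
    ∃ s : Finset (Set T), (∀ A ∈ s, IsArc A) ∧ ⋃₀ (s : Set (Set T)) = Set.univ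

/-- The unique arc from `x` to `y` in a tree. -/
noncomputable def treeArc {T : Type*} [MetricSpace T] (hT : IsTreeSpace T) (x y : T) :
    Set T := by
  classical exact if h : x = y then {x} else (hT.uniqueArc x y h).choose

/-- `Comp B x` : the connected component of `x` in `B` if `x ∈ B`, else `{x}`. -/
noncomputable def Comp {T : Type*} [TopologicalSpace T] (B : Set T) (x : T) : Set T := by
  classical exact if x ∈ B then connectedComponentIn B x else {x}

/-- `x` is an endpoint of the whole space (valence one). -/
def IsEnd {T : Type*} [TopologicalSpace T] (x : T) : Prop :=
  IsConnected ({x}ᶜ : Set T)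

/-- `x` is a cut-point of the whole space (valence at least two). -/
def IsCut {T : Type*} [TopologicalSpace T] (x : T) : Prop :=
  ¬ IsPreconnected ({x}ᶜ : Set T)

/-- `x` is an endpoint of the subspace `S` (valence one in `S`). -/
def IsEndpointOf {T : Type*} [TopologicalSpace T] (S : Set T) (x : T) : Prop :=
  x ∈ S ∧ IsConnected (S \ {x})

/-- A subcontinuum: a nonempty compact connected subset. -/
def IsSubcontinuum {T : Type*} [TopologicalSpace T] (A : Set T) : Prop :=
  A.Nonempty ∧ IsCompact A ∧ IsConnected A

/-- Attracting fixed point. -/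
def IsAFP {T : Type*} [TopologicalSpace T] (f : T → T) (x : T) : Prop :=
  f x = x ∧ ∀ U : Set T, IsOpen U → x ∈ U →
    ∃ V : Set T, IsOpen V ∧ x ∈ V ∧ V ⊆ U ∧ f '' closure V ⊆ V

/-- `A` is asymptotically periodic under `f`: for some `p ≥ 1` the sequence
`f^{pn}(A)` converges in the Hausdorff metric (to a nonempty compact set). -/
def AsympPeriodic {T : Type*} [MetricSpace T] (f : T → T) (A : Set T) : Prop :=
  ∃ p : ℕ, 1 ≤ p ∧ ∃ L : Set T, L.Nonempty ∧ IsCompact L ∧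
    Tendsto (fun n : ℕ => hausdorffDist (f^[p * n] '' A) L) atTop (𝓝 0)

/-- Kuratowski lower limit of a sequence of sets. -/
def KLiminf {T : Type*} [TopologicalSpace T] (A : ℕ → Set T) : Set T :=
  {x | ∀ U : Set T, IsOpen U → x ∈ U → ∀ᶠ n in atTop, (U ∩ A n).Nonempty}

/-- Kuratowski upper limit of a sequence of sets. -/
def KLimsup {T : Type*} [TopologicalSpace T] (A : ℕ → Set T) : Set T :=
  {x | ∀ U : Set T, IsOpen U → x ∈ U → ∃ᶠ n in atTop, (U ∩ A n).Nonempty}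

/-- Convergence in the hyperspace: the Kuratowski lower and upper limits agree. -/
def KConv {T : Type*} [TopologicalSpace T] (A : ℕ → Set T) : Prop :=
  KLiminf A = KLimsup A

/-- Set-theoretic limit superior of the iterated images of `A`. -/
def Ls {T : Type*} (f : T → T) (A : Set T) : Set T :=
  ⋂ m : ℕ, ⋃ n : ℕ, ⋃ (_ : m ≤ n), f^[n] '' A

/-- The hyperspace of subcontinua of `T`, with the Hausdorff metric. -/
abbrev SubCon (T : Type*) [MetricSpace T] :=
  {A : NonemptyCompacts T // IsConnected (A.1 : Set T)}

/-- The induced map on the hyperspace of subcontinua. -/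
noncomputable def indCon {T : Type*} [MetricSpace T] (f : T → T) (hf : Continuous f) :
    SubCon T → SubCon T :=
  fun A => ⟨⟨⟨f '' (A.1 : Set T), A.1.isCompact.image hf⟩, A.1.nonempty.image f⟩,
    A.2.image f hf.continuousOn⟩

/-- Topological entropy (Bowen–Dinaburg) of `f` on the subset `S`. -/
noncomputable def entropyOn {X : Type*} [MetricSpace X] (f : X → X) (S : Set X) : EReal :=
  Dynamics.coverEntropy f S

/-- Topological entropy of `f`. -/
noncomputable def entropy {X : Type*} [MetricSpace X] (f : X → X) : EReal :=
  Dynamics.coverEntropy f Set.univ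

/-- Maximal cardinality of an `(n,f,ε)`-separated subset of `S`. -/
noncomputable def sepNumOn {X : Type*} [MetricSpace X] (f : X → X) (S : Set X)
    (n : ℕ) (ε : ℝ) : ℕ :=
  sSup {k : ℕ | ∃ E : Finset X, ↑E ⊆ S ∧
    (∀ x ∈ E, ∀ y ∈ E, x ≠ y → ∃ j < n, ε < dist (f^[j] x) (f^[j] y)) ∧ E.card = k}

/-- Minimal cardinality of an `(n,f,ε)`-spanning subset of `S`. -/
noncomputable def spanNumOn {X : Type*} [MetricSpace X] (f : X → X) (S : Set X)
    (n : ℕ) (ε : ℝ) : ℕ :=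
  sInf {k : ℕ | ∃ F : Finset X, ↑F ⊆ S ∧
    (∀ x ∈ S, ∃ y ∈ F, ∀ j < n, dist (f^[j] x) (f^[j] y) ≤ ε) ∧ F.card = k}

noncomputable def sepNum {X : Type*} [MetricSpace X] (f : X → X) (n : ℕ) (ε : ℝ) : ℕ :=
  sepNumOn f Set.univ n ε

noncomputable def spanNum {X : Type*} [MetricSpace X] (f : X → X) (n : ℕ) (ε : ℝ) : ℕ :=
  spanNumOn f Set.univ n ε

/-- The graph of a map. -/
def graphOf {X : Type*} (φ : X → X) : Set (X × X) := {p | p.2 = φ p.1}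

/-- The functional envelope: the closure, in the hyperspace of nonempty compact
subsets of `X × X` with the Hausdorff metric, of the set of graphs of continuous
self-maps of `X`. -/
def FunctionalEnvelope (X : Type*) [MetricSpace X] :
    Set (NonemptyCompacts (X × X)) :=
  closure {G : NonemptyCompacts (X × X) | ∃ φ : X → X, Continuous φ ∧
    (G : Set (X × X)) = graphOf φ}

/-- `F` is the map induced by `f` on the functional envelope:
`F(φ) = f ∘ φ`, i.e. on graphs, `F(G) = (id × f)(G)`. -/
def IsEnvelopeMap {X : Type*} [MetricSpace X] (f : X → X)
    (F : ↥(FunctionalEnvelope X) → ↥(FunctionalEnvelope X)) : Prop :=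
  ∀ G : ↥(FunctionalEnvelope X),
    ((F G : NonemptyCompacts (X × X)) : Set (X × X)) =
      Prod.map id f '' ((G : NonemptyCompacts (X × X)) : Set (X × X))

/-- The setoid on `T` identifying all points of `M` (so that `Quotient` is `T/M`). -/
def collapseSetoid {T : Type*} (M : Set T) : Setoid T where
  r a b := a = b ∨ (a ∈ M ∧ b ∈ M)
  iseqv := by
    refine ⟨fun a => Or.inl rfl, ?_, ?_⟩
    · rintro a b (rfl | ⟨h1, h2⟩)
      exacts [Or.inl rfl, Or.inr ⟨h2, h1⟩]
    · rintro a b c (rfl | ⟨h1, h2⟩) h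
      · exact h
      · rcases h with rfl | ⟨h3, h4⟩
        exacts [Or.inr ⟨h1, h2⟩, Or.inr ⟨h1, h4⟩]

/-!
If `z` does not belong to a connected set `B`, then `B` lies in the open set `{z}ᶜ`. Small arcs
inside `{z}ᶜ` chain up to an arc in `{z}ᶜ` joining any two given points `x, y` of `B`, so the unique
arc from `x` to `y` misses `z`. Hence a connected set contains the arc between any two of its
points, and this property passes to arbitrary intersections.
-/

/-- The points `x` and `y` are joined by an arc inside `S`, or `x = y ∈ S`. The arc is parametrised
by the real interval with endpoints `a` and `b`, in either order, which may be a single point; the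
values of `f` outside that interval are irrelevant. -/
def ArcJoinedIn {T : Type*} [TopologicalSpace T] (S : Set T) (x y : T) : Prop :=
  ∃ (f : ℝ → T) (a b : ℝ), Continuous f ∧ InjOn f (uIcc a b) ∧ MapsTo f (uIcc a b) S ∧
    f a = x ∧ f b = y

/-- Local arcwise connectedness: inside each open set, every point is joined to all points
sufficiently close to it by arcs. -/
def LocArcConnected (T : Type*) [TopologicalSpace T] : Prop :=
  ∀ ⦃U : Set T⦄, IsOpen U → ∀ p ∈ U, ∀ᶠ q in 𝓝 p, ArcJoinedIn U p q

section

variable {T : Type*} [TopologicalSpace T]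

namespace ArcJoinedIn

variable {S S' : Set T} {x y z : T}

theorem refl (hx : x ∈ S) : ArcJoinedIn S x x :=
  ⟨fun _ ↦ x, 0, 0, continuous_const, by simp, fun _ _ ↦ hx, rfl, rfl⟩

theorem symm (h : ArcJoinedIn S x y) : ArcJoinedIn S y x := by
  obtain ⟨f, a, b, hf, hinj, hS, hx, hy⟩ := h
  exact ⟨f, b, a, hf, uIcc_comm a b ▸ hinj, uIcc_comm a b ▸ hS, hy, hx⟩

theorem mono (h : ArcJoinedIn S x y) (hS : S ⊆ S') : ArcJoinedIn S' x y := by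
  obtain ⟨f, a, b, hf, hinj, hfS, hx, hy⟩ := h
  exact ⟨f, a, b, hf, hinj, hfS.mono_right hS, hx, hy⟩

theorem exists_parametrization_Icc (h : ArcJoinedIn S x y) (c : ℝ) :
    ∃ (f : ℝ → T) (d : ℝ), c ≤ d ∧ Continuous f ∧ InjOn f (Icc c d) ∧ MapsTo f (Icc c d) S ∧
      f c = x ∧ f d = y := by
  obtain ⟨f, a, b, hf, hinj, hS, rfl, rfl⟩ := h
  rcases le_total a b with hab | hba
  · have hmaps : MapsTo (fun t ↦ a + (t - c)) (Icc c (c + (b - a))) (uIcc a b) := fun t ht ↦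
      Icc_subset_uIcc ⟨by linarith [ht.1], by linarith [ht.2]⟩
    refine ⟨fun t ↦ f (a + (t - c)), c + (b - a), by linarith, by fun_prop, ?_,
      hS.comp hmaps, by simp, by simp⟩
    exact hinj.comp (fun s _ t _ hst ↦ by simpa using hst) hmaps
  · have hmaps : MapsTo (fun t ↦ a - (t - c)) (Icc c (c + (a - b))) (uIcc a b) := fun t ht ↦
      Icc_subset_uIcc' ⟨by linarith [ht.2], by linarith [ht.1]⟩
    refine ⟨fun t ↦ f (a - (t - c)), c + (a - b), by linarith, by fun_prop, ?_,
      hS.comp hmaps, by simp, by simp⟩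
    exact hinj.comp (fun s _ t _ hst ↦ by simpa using hst) hmaps

theorem trans_of_inter_subset_singleton (hxy : ArcJoinedIn S x y) (hyz : ArcJoinedIn S' y z)
    (hSS' : S ∩ S' ⊆ {y}) : ArcJoinedIn (S ∪ S') x z := by
  obtain ⟨f, b, hb, hf, hfinj, hfS, rfl, hfb⟩ := hxy.exists_parametrization_Icc 0
  obtain ⟨g, d, hbd, hg, hginj, hgS, hgb, rfl⟩ := hyz.exists_parametrization_Icc b
  let φ : ℝ → T := fun t ↦ if t ≤ b then f t else g t
  have hφf : EqOn φ f (Icc 0 b) := fun t ht ↦ if_pos ht.2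
  have hφg : EqOn φ g (Ioc b d) := fun t ht ↦ if_neg ht.1.not_ge
  have hφc : Continuous φ := hf.if_le hg continuous_id continuous_const fun t ht ↦ by
    obtain rfl : t = b := ht
    exact hfb.trans hgb.symm
  have hφS : MapsTo φ (Icc 0 b) S := hfS.congr hφf.symm
  have hφS' : MapsTo φ (Ioc b d) S' := (hgS.mono_left Ioc_subset_Icc_self).congr hφg.symm
  have hφinj : InjOn φ (Icc 0 b ∪ Ioc b d) := by
    refine (injOn_union (disjoint_left.2 fun t ht ht' ↦ ht'.1.not_ge ht.2)).2
      ⟨hfinj.congr hφf.symm, (hginj.mono Ioc_subset_Icc_self).congr hφg.symm,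
        fun s hs t ht hst ↦ ht.1.ne' ?_⟩
    have hty : φ t = y := hSS' ⟨hst ▸ hφS hs, hφS' ht⟩
    exact hginj (Ioc_subset_Icc_self ht) (left_mem_Icc.2 hbd) (by rw [← hφg ht, hty, hgb])
  have hIcc : uIcc 0 d = Icc 0 b ∪ Ioc b d := by
    rw [uIcc_of_le (hb.trans hbd), Icc_union_Ioc_eq_Icc hb hbd]
  have hφd : φ d = g d := by
    rcases hbd.eq_or_lt with rfl | hlt
    · rw [hφf (right_mem_Icc.2 hb), hfb, hgb]
    · exact hφg (right_mem_Ioc.2 hlt)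
  exact ⟨φ, 0, d, hφc, hIcc ▸ hφinj, hIcc ▸ hφS.union_union hφS', hφf (left_mem_Icc.2 hb), hφd⟩

theorem exists_first_mem {K : Set T} (h : ArcJoinedIn S x y) (hK : IsClosed K) (hy : y ∈ K) :
    ∃ p ∈ K, ArcJoinedIn (insert p (S \ K)) x p := by
  obtain ⟨f, b, hb, hf, hinj, hS, rfl, rfl⟩ := h.exists_parametrization_Icc 0
  obtain ⟨t, ⟨ht, htK⟩, hmin⟩ := (isCompact_Icc.inter_right (hK.preimage hf)).exists_isLeast
    ⟨b, right_mem_Icc.2 hb, hy⟩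
  have hsub : uIcc 0 t ⊆ Icc 0 b := uIcc_subset_Icc (left_mem_Icc.2 hb) ht
  refine ⟨f t, htK, f, 0, t, hf, hinj.mono hsub, fun s hs ↦ ?_, rfl, rfl⟩
  have hst : s ≤ t := (uIcc_of_le ht.1 ▸ hs).2
  rcases hst.eq_or_lt with rfl | hlt
  · exact mem_insert _ _
  · exact Or.inr ⟨hS (hsub hs), fun hsK ↦ hlt.not_ge (hmin ⟨hsub hs, hsK⟩)⟩

theorem exists_isCompact (h : ArcJoinedIn S x y) :
    ∃ K ⊆ S, IsCompact K ∧ x ∈ K ∧ ∀ p ∈ K, ArcJoinedIn K p y := by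
  obtain ⟨f, a, b, hf, hinj, hS, rfl, rfl⟩ := h
  refine ⟨f '' uIcc a b, hS.image_subset, isCompact_uIcc.image hf,
    mem_image_of_mem f left_mem_uIcc, ?_⟩
  rintro _ ⟨s, hs, rfl⟩
  have hsub : uIcc s b ⊆ uIcc a b := uIcc_subset_uIcc_right hs
  exact ⟨f, s, b, hf, hinj.mono hsub, (mapsTo_image f _).mono_left hsub, rfl, rfl⟩

theorem trans [T2Space T] (hxy : ArcJoinedIn S x y) (hyz : ArcJoinedIn S y z) :
    ArcJoinedIn S x z := by
  -- Leave the first arc for the second one where they first meet.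
  obtain ⟨K, hKS, hK, hyK, hKz⟩ := hyz.exists_isCompact
  obtain ⟨p, hpK, hxp⟩ := hxy.exists_first_mem hK.isClosed hyK
  have hinter : insert p (S \ K) ∩ K ⊆ {p} := by
    rintro q ⟨rfl | hq, hqK⟩
    exacts [rfl, (hq.2 hqK).elim]
  refine (hxp.trans_of_inter_subset_singleton (hKz p hpK) hinter).mono ?_
  exact union_subset (insert_subset (hKS hpK) sdiff_subset) hKS

theorem exists_isArcBetween [T2Space T] (h : ArcJoinedIn S x y) (hxy : x ≠ y) :
    ∃ A ⊆ S, IsArcBetween A x y := by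
  obtain ⟨f, a, b, hf, hinj, hS, rfl, rfl⟩ := h
  have hmem (t : Icc (0 : ℝ) 1) : Path.segment a b t ∈ uIcc a b := by
    rw [← segment_eq_uIcc, ← Path.range_segment]
    exact mem_range_self t
  have hφi : Function.Injective fun t ↦ f (Path.segment a b t) := fun s t hst ↦
    Path.segment_injective_of_ne (ne_of_apply_ne f hxy) (hinj (hmem s) (hmem t) hst)
  have hφ := (hf.comp (Path.segment a b).continuous).isClosedEmbedding hφi
  exact ⟨_, range_subset_iff.2 fun t ↦ hS (hmem t), hφ.isEmbedding.toHomeomorph,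
    congrArg f (Path.segment a b).source, congrArg f (Path.segment a b).target⟩

end ArcJoinedIn

theorem IsArcBetween.isArc {A : Set T} {x y : T} (h : IsArcBetween A x y) : IsArc A :=
  ⟨h.choose⟩

theorem IsArcBetween.left_mem {A : Set T} {x y : T} (h : IsArcBetween A x y) : x ∈ A := by
  obtain ⟨e, rfl, -⟩ := h
  exact Subtype.coe_prop _

theorem IsArcBetween.right_mem {A : Set T} {x y : T} (h : IsArcBetween A x y) : y ∈ A := by
  obtain ⟨e, -, rfl⟩ := h
  exact Subtype.coe_prop _

theorem IsArcBetween.ne {A : Set T} {x y : T} (h : IsArcBetween A x y) : x ≠ y := by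
  obtain ⟨e, rfl, rfl⟩ := h
  exact Subtype.coe_injective.ne (e.injective.ne (by simp))

theorem IsArc.isPreconnected {A : Set T} (h : IsArc A) : IsPreconnected A := by
  obtain ⟨e⟩ := h
  have := Subtype.preconnectedSpace (isPreconnected_Icc (a := (0 : ℝ)) (b := 1))
  exact isPreconnected_iff_preconnectedSpace.2
    (e.surjective.denseRange.preconnectedSpace e.continuous)

theorem IsArc.isCompact {A : Set T} (h : IsArc A) : IsCompact A := by
  obtain ⟨e⟩ := h
  exact isCompact_iff_compactSpace.2 e.compactSpace

theorem IsArc.eventually_arcJoinedIn {A U : Set T} (hA : IsArc A) (hU : IsOpen U) {p : T}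
    (hpA : p ∈ A) (hpU : p ∈ U) : ∀ᶠ q in 𝓝[A] p, ArcJoinedIn U p q := by
  obtain ⟨e⟩ := hA
  obtain ⟨t₀, ht₀⟩ := e.surjective ⟨p, hpA⟩
  obtain rfl : (e t₀ : T) = p := congrArg Subtype.val ht₀
  let f : ℝ → T := IccExtend zero_le_one fun t ↦ (e t : T)
  have hfc : Continuous f := (continuous_subtype_val.comp e.continuous).Icc_extend'
  have hfe (t : Icc (0 : ℝ) 1) : f t = e t := IccExtend_val _ _ t
  have hfinj : InjOn f (Icc 0 1) := fun s hs t ht hst ↦ congrArg Subtype.val <|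
    e.injective <| Subtype.ext <| (hfe ⟨s, hs⟩).symm.trans <| hst.trans (hfe ⟨t, ht⟩)
  have hnhds : f ⁻¹' U ∈ 𝓝 (t₀ : ℝ) := (hU.preimage hfc).mem_nhds (by simpa [hfe] using hpU)
  have hsegment : ∀ᶠ t : ℝ in 𝓝 (t₀ : ℝ), uIcc (t₀ : ℝ) t ⊆ f ⁻¹' U :=
    tendsto_smallSets_iff.1 (tendsto_const_nhds.uIcc tendsto_id) _ hnhds
  rw [nhdsWithin_eq_map_subtype_coe hpA, eventually_map, ← e.map_nhds_eq, eventually_map]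
  filter_upwards [continuous_subtype_val.continuousAt.eventually hsegment] with t ht
  exact ⟨f, t₀, t, hfc, hfinj.mono (uIcc_subset_Icc t₀.2 t.2), ht, hfe t₀, hfe t⟩

theorem LocArcConnected.of_finite_cover [T2Space T] {s : Set (Set T)} (hfin : s.Finite)
    (hs : ∀ A ∈ s, IsArc A) (hcov : ⋃₀ s = univ) : LocArcConnected T := by
  intro U hU p hpU
  rw [← nhdsWithin_univ, ← hcov, nhdsWithin_sUnion hfin]
  simp only [eventually_iSup]
  intro A hA
  by_cases hpA : p ∈ A
  · exact (hs A hA).eventually_arcJoinedIn hU hpA hpU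
  · have hbot : 𝓝[A] p = ⊥ := by
      rwa [← notMem_closure_iff_nhdsWithin_eq_bot, (hs A hA).isCompact.isClosed.closure_eq]
    exact hbot ▸ eventually_bot

theorem LocArcConnected.arcJoinedIn_of_isPreconnected [T2Space T] (hT : LocArcConnected T)
    {B U : Set T} (hB : IsPreconnected B) (hU : IsOpen U) (hBU : B ⊆ U) {x y : T} (hx : x ∈ B)
    (hy : y ∈ B) : ArcJoinedIn U x y :=
  hB.induction₂ (ArcJoinedIn U) (fun p hp ↦ nhdsWithin_le_nhds (hT hU p (hBU hp)))
    (fun _ _ _ _ _ _ ↦ .trans) (fun _ _ _ _ ↦ .symm) hx hy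

theorem IsArcBetween.subset_of_isPreconnected [T2Space T] (hT : LocArcConnected T) {I B : Set T}
    {x y : T} (hI : IsArcBetween I x y) (huniq : ∀ J, IsArcBetween J x y → J = I)
    (hB : IsPreconnected B) (hx : x ∈ B) (hy : y ∈ B) : I ⊆ B := by
  intro z hzI
  by_contra hzB
  have hjoined : ArcJoinedIn {z}ᶜ x y := hT.arcJoinedIn_of_isPreconnected hB isOpen_compl_singleton
    (subset_compl_singleton_iff.2 hzB) hx hy
  obtain ⟨J, hJz, hJ⟩ := hjoined.exists_isArcBetween hI.ne
  exact hJz (huniq J hJ ▸ hzI) rfl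

theorem iInter_connected_or_empty_general [T2Space T] (hloc : LocArcConnected T)
    (huniq : ∀ x y : T, x ≠ y → ∃! I : Set T, IsArcBetween I x y) {ι : Sort*} (A : ι → Set T)
    (hA : ∀ i, IsPreconnected (A i)) : (⋂ i, A i) = ∅ ∨ IsConnected (⋂ i, A i) := by
  refine (eq_empty_or_nonempty _).imp_right fun hne ↦ ⟨hne, ?_⟩
  refine isPreconnected_of_forall_pair fun x hx y hy ↦ ?_
  rcases eq_or_ne x y with rfl | hxy
  · exact ⟨{x}, singleton_subset_iff.2 hx, rfl, rfl, isPreconnected_singleton⟩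
  · obtain ⟨I, hI, hIuniq⟩ := huniq x y hxy
    have hIA : I ⊆ ⋂ i, A i := subset_iInter fun i ↦
      hI.subset_of_isPreconnected hloc hIuniq (hA i) (mem_iInter.1 hx i) (mem_iInter.1 hy i)
    exact ⟨I, hIA, hI.left_mem, hI.right_mem, hI.isArc.isPreconnected⟩

end

theorem IsTreeSpace.locArcConnected {T : Type*} [MetricSpace T] (hT : IsTreeSpace T) :
    LocArcConnected T := by
  rcases hT.finiteArcs with ⟨x, hx⟩ | ⟨s, hs, hcov⟩
  · have : Subsingleton T := subsingleton_univ_iff.1 (hx ▸ subsingleton_singleton)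
    exact fun U _ p hp ↦ .of_forall fun q ↦ Subsingleton.elim p q ▸ .refl hp
  · exact .of_finite_cover s.finite_toSet hs hcov

/-- a decreasing intersection of connected subsets of a tree is
connected or empty. -/
theorem iInter_connected_or_empty {T : Type*} [MetricSpace T]
    (hT : IsTreeSpace T) (A : ℕ → Set T) (hA : ∀ n, IsPreconnected (A n))
    (hdec : ∀ n : ℕ, A (n + 1) ⊆ A n) :
    (⋂ n, A n) = ∅ ∨ IsConnected (⋂ n, A n) :=
  iInter_connected_or_empty_general hT.locArcConnected hT.uniqueArc A hA
end

section
/- Let f : T → T be a continuous map of a tree such that no cut-point of T is periodic. Then every subcontinuum A of T is asymptotically periodic under f: there is p ≥ 1 such that the sequence (f^{pn}(A))_{n≥0} converges in the Hausdorff metric on subcontinua of T. -/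
open Set Filter Metric Topology TopologicalSpace

/-! If no cut point is periodic, the sets `{x} ∪ (branch at x towards f x)`, with `x` a cut point,
have the finite intersection property, so some fixed point `a` is seen from every cut point in the
direction in which `f` moves it. In a tree such a point is an endpoint with arbitrarily small
invariant neighbourhoods, and it plays the same role for every iterate of `f`.

The endpoints are finitely many and contain all periodic points, so a power `g` of `f` fixes every
periodic point. An infinite orbit of `g` eventually consists of cut points, each separating its
predecessors from `a`; along each arc issuing from `a` it descends, and therefore it accumulates at
finitely many points only, one of them fixed, hence equal to `a`. By stability the iterates of `g`
then converge to `a` near the initial point. Every other orbit lands on a fixed endpoint, and if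
that endpoint `e` is not `a`, then the arcs issuing from `e` expand under `g`, so the images of a
piece of a subcontinuum `A` through `e` increase. Hence the Kuratowski upper limit of `g^n(A)` is
contained in the lower limit, which by compactness is convergence in the Hausdorff metric. -/

section Iterates

variable {X : Type*} {g : X → X} {x : X}

theorem exists_iterate_mem_periodicPts (h : ¬ Function.Injective fun n => g^[n] x) :
    ∃ n, g^[n] x ∈ Function.periodicPts g := by
  obtain ⟨i, j, hij, hne⟩ := Function.not_injective_iff.1 h
  wlog hlt : i < j generalizing i j
  · exact this j i hij.symm hne.symm (by omega)
  refine ⟨i, Function.mk_mem_periodicPts (Nat.sub_pos_of_lt hlt) ?_⟩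
  rw [Function.IsPeriodicPt, Function.IsFixedPt, ← Function.iterate_add_apply,
    Nat.sub_add_cancel hlt.le]
  exact hij.symm

theorem exists_common_period (hfin : (Function.periodicPts g).Finite) :
    ∃ p, 1 ≤ p ∧ ∀ x ∈ Function.periodicPts g, g^[p] x = x := by
  refine ⟨∏ x ∈ hfin.toFinset, Function.minimalPeriod g x,
    Nat.succ_le_of_lt (Finset.prod_pos fun x hx => ?_), fun x hx => ?_⟩
  · exact Function.minimalPeriod_pos_of_mem_periodicPts (hfin.mem_toFinset.1 hx)
  · exact (Function.isPeriodicPt_minimalPeriod g x).trans_dvd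
      (Finset.dvd_prod_of_mem _ (hfin.mem_toFinset.2 hx))

theorem monotone_iterate_image {J : Set X} (hJ : J ⊆ g '' J) : Monotone fun n => g^[n] '' J := by
  refine monotone_nat_of_le_succ fun n => ?_
  rw [Function.iterate_succ, image_comp]
  exact image_mono hJ

theorem mapsTo_mapClusterPt_orbit [TopologicalSpace X] (hg : Continuous g) :
    MapsTo g {y | MapClusterPt y atTop fun n => g^[n] x}
      {y | MapClusterPt y atTop fun n => g^[n] x} := by
  intro y hy
  have h : MapClusterPt (g y) atTop ((fun n => g^[n] x) ∘ fun n => n + 1) := by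
    simpa only [Function.comp_def, Function.iterate_succ_apply'] using
      MapClusterPt.continuousAt_comp hg.continuousAt hy
  exact h.of_comp (tendsto_add_atTop_nat 1)

theorem exists_mapClusterPt_mem_periodicPts [TopologicalSpace X] [CompactSpace X] [T2Space X]
    (hg : Continuous g) {F : Set X} (hF : F.Finite)
    (h : Tendsto (fun n => g^[n] x) atTop (𝓝ˢ F)) :
    ∃ z ∈ F, MapClusterPt z atTop (fun n => g^[n] x) ∧ z ∈ Function.periodicPts g := by
  have hΩF : ∀ y, MapClusterPt y atTop (fun n => g^[n] x) → y ∈ F := by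
    intro y hy
    by_contra hyF
    have hdisj : Disjoint (𝓝 y) (𝓝ˢ F) := disjoint_nhds_nhdsSet.2 (by rwa [hF.isClosed.closure_eq])
    exact hy.neBot.ne (hdisj.mono_right h).eq_bot
  obtain ⟨y, hy⟩ := exists_clusterPt_of_compactSpace (map (fun n => g^[n] x) atTop)
  have hiter : ∀ n, MapClusterPt (g^[n] y) atTop fun n => g^[n] x := fun n =>
    (mapsTo_mapClusterPt_orbit hg).iterate n hy
  obtain ⟨n, hn⟩ := exists_iterate_mem_periodicPts (g := g) (x := y) fun hinj =>
    infinite_range_of_injective hinj (hF.subset (range_subset_iff.2 fun n => hΩF _ (hiter n)))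
  exact ⟨_, hΩF _ (hiter n), hiter n, hn⟩

theorem tendsto_iterate_of_mapClusterPt [TopologicalSpace X] (hg : Continuous g) {a : X}
    (hstable : ∀ G ∈ 𝓝 a, ∀ᶠ y in 𝓝 a, ∀ n, g^[n] y ∈ G)
    (hx : MapClusterPt a atTop fun n => g^[n] x) :
    Tendsto (fun p : ℕ × X => g^[p.1] p.2) (atTop ×ˢ 𝓝 x) (𝓝 a) := by
  refine fun G hG => mem_map.2 ?_
  obtain ⟨N, hN⟩ := (hx.frequently (eventually_eventually_nhds.2 (hstable G hG))).exists
  filter_upwards [prod_mem_prod (Ici_mem_atTop N) ((hg.iterate N).continuousAt.eventually hN)]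
  rintro ⟨n, y⟩ ⟨hn, hy⟩
  simpa only [mem_preimage, ← Function.iterate_add_apply, Nat.sub_add_cancel hn] using hy (n - N)

end Iterates

section Limits

theorem tendsto_csInf_of_antitoneOn {ι α : Type*} [Preorder ι] [ConditionallyCompleteLinearOrder α]
    [TopologicalSpace α] [OrderTopology α] {σ : ι → α} {s : Set ι} (hσ : AntitoneOn σ s)
    (hne : s.Nonempty) (hbdd : BddBelow (σ '' s)) :
    Tendsto σ (atTop ⊓ 𝓟 s) (𝓝 (sInf (σ '' s))) := by
  refine tendsto_order.2 ⟨fun b hb => ?_, fun b hb => ?_⟩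
  · filter_upwards [mem_inf_of_right (mem_principal_self s)] with i hi
    exact hb.trans_le (csInf_le hbdd (mem_image_of_mem σ hi))
  · obtain ⟨_, ⟨j, hj, rfl⟩, hjb⟩ := exists_lt_of_csInf_lt (hne.image σ) hb
    filter_upwards [mem_inf_of_left (Ici_mem_atTop j), mem_inf_of_right (mem_principal_self s)]
      with i hji hi
    exact (hσ hj hi hji).trans_lt hjb

theorem eventually_forall_eq_imp {X Y : Type*} [TopologicalSpace X] [TopologicalSpace Y] [T2Space Y]
    {η : X → Y} (hη : Continuous η) {K : Set X} (hK : IsCompact K) {P : X → Prop} {p : Y}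
    (h : ∀ r ∈ K, η r = p → ∀ᶠ t in 𝓝 r, P t) : ∀ᶠ q in 𝓝 p, ∀ t ∈ K, η t = q → P t := by
  have hbad : IsClosed (η '' (K \ interior {t | P t})) :=
    ((hK.diff isOpen_interior).image hη).isClosed
  have hp : p ∉ η '' (K \ interior {t | P t}) := by
    rintro ⟨r, ⟨hr, hrP⟩, rfl⟩
    exact hrP (mem_interior_iff_mem_nhds.2 (h r hr rfl))
  filter_upwards [hbad.isOpen_compl.mem_nhds hp]
  rintro _ hq t ht rfl
  by_contra htP
  exact hq ⟨t, ⟨ht, fun hint => htP (interior_subset hint)⟩, rfl⟩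

end Limits

section KuratowskiLimits

theorem exists_mapClusterPt_of_mem_kLimsup {X Y : Type*} [TopologicalSpace X] [TopologicalSpace Y]
    {F : ℕ → X → Y} {K : Set X} (hK : IsCompact K) {y : Y} (hy : y ∈ KLimsup fun n => F n '' K) :
    ∃ x ∈ K, MapClusterPt y (atTop ×ˢ 𝓝[K] x) fun p : ℕ × X => F p.1 p.2 := by
  by_contra! hcon
  suffices h : ∃ U ∈ 𝓝 y, ∀ᶠ n in atTop, ∀ x ∈ K, F n x ∉ U by
    obtain ⟨U, hU, hev⟩ := h
    obtain ⟨n, ⟨_, hzU, x, hx, rfl⟩, hn⟩ := ((hy (interior U) isOpen_interior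
      (mem_interior_iff_mem_nhds.2 hU)).and_eventually hev).exists
    exact hn x hx (interior_subset hzU)
  refine hK.induction_on (p := fun s => ∃ U ∈ 𝓝 y, ∀ᶠ n in atTop, ∀ x ∈ s, F n x ∉ U)
    ⟨univ, univ_mem, by simp⟩ ?_ ?_ fun x hx => ?_
  · rintro s t hst ⟨U, hU, hev⟩
    exact ⟨U, hU, hev.mono fun n hn x hx => hn x (hst hx)⟩
  · rintro s t ⟨U, hU, hUev⟩ ⟨V, hV, hVev⟩
    refine ⟨U ∩ V, inter_mem hU hV, (hUev.and hVev).mono ?_⟩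
    rintro n ⟨hnU, hnV⟩ x (hx | hx) hxUV
    exacts [hnU x hx hxUV.1, hnV x hx hxUV.2]
  · have hx := hcon x hx
    simp only [mapClusterPt_iff_frequently, not_forall, not_frequently] at hx
    obtain ⟨U, hU, hev⟩ := hx
    obtain ⟨P, hP, Q, hQ, hPQ⟩ := eventually_prod_iff.1 hev
    exact ⟨{x | Q x}, hQ, U, hU, hP.mono fun n hn x hx => hPQ hn hx⟩

theorem kLimsup_image_subset_kLiminf {X Y : Type*} [TopologicalSpace X] [TopologicalSpace Y]
    [T2Space Y] {F : ℕ → X → Y} {K : Set X} (hK : IsCompact K)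
    (h : ∀ x ∈ K, (∃ b, Tendsto (fun p : ℕ × X => F p.1 p.2) (atTop ×ˢ 𝓝[K] x) (𝓝 b)) ∨
      ∃ V ∈ 𝓝[K] x, ∃ N, ∀ n ≥ N, ∀ m ≥ n, F n '' V ⊆ F m '' K) :
    KLimsup (fun n => F n '' K) ⊆ KLiminf fun n => F n '' K := by
  intro y hy U hU hyU
  obtain ⟨x, hx, hxy⟩ := exists_mapClusterPt_of_mem_kLimsup hK hy
  rcases h x hx with ⟨b, hb⟩ | ⟨V, hV, N, hVK⟩
  · have : (𝓝 y ⊓ 𝓝 b).NeBot := hxy.neBot.mono (inf_le_inf_left _ hb)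
    obtain rfl : y = b := eq_of_nhds_neBot this
    refine (hb.eventually (hU.mem_nhds hyU)).curry.mono fun n hn => ?_
    exact ⟨F n x, hn.self_of_nhdsWithin hx, mem_image_of_mem _ hx⟩
  · obtain ⟨⟨n, x'⟩, hx'U, hn, hx'V⟩ := ((hxy.frequently (hU.mem_nhds hyU)).and_eventually
      (prod_mem_prod (Ici_mem_atTop N) hV)).exists
    filter_upwards [Ici_mem_atTop n] with m hm
    exact ⟨_, hx'U, hVK n hn m hm (mem_image_of_mem _ hx'V)⟩

theorem isClosed_kLimsup {X : Type*} [TopologicalSpace X] (A : ℕ → Set X) :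
    IsClosed (KLimsup A) := by
  refine isClosed_of_closure_subset fun x hx U hU hxU => ?_
  obtain ⟨z, hzU, hz⟩ := mem_closure_iff.1 hx U hU hxU
  exact hz U hU hzU

theorem eventually_subset_of_kLimsup_subset {X : Type*} [TopologicalSpace X] [CompactSpace X]
    {A : ℕ → Set X} {U : Set X} (hU : IsOpen U) (hA : KLimsup A ⊆ U) :
    ∀ᶠ n in atTop, A n ⊆ U := by
  suffices h : ∀ᶠ n in atTop, Disjoint Uᶜ (A n) from
    h.mono fun n hn => disjoint_compl_left_iff_subset.1 hn
  refine hU.isClosed_compl.isCompact.induction_on (p := fun s => ∀ᶠ n in atTop, Disjoint s (A n))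
    (by simp) (fun s t hst ht => ht.mono fun n hn => hn.mono_left hst)
    (fun s t hs ht => (hs.and ht).mono fun n hn => hn.1.union_left hn.2) fun y hy => ?_
  have hyA : y ∉ KLimsup A := fun h => hy (hA h)
  simp only [KLimsup, mem_ofPred_eq, not_forall, not_frequently] at hyA
  obtain ⟨V, hV, hyV, hev⟩ := hyA
  exact ⟨V, mem_nhdsWithin_of_mem_nhds (hV.mem_nhds hyV),
    hev.mono fun n hn => disjoint_iff_inter_eq_empty.2 (not_nonempty_iff_eq_empty.1 hn)⟩

theorem eventually_subset_thickening_of_subset_kLiminf {X : Type*} [PseudoMetricSpace X]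
    {A : ℕ → Set X} {K : Set X} (hK : IsCompact K) (hA : K ⊆ KLiminf A) {ε : ℝ} (hε : 0 < ε) :
    ∀ᶠ n in atTop, K ⊆ thickening ε (A n) := by
  obtain ⟨t, htK, ht, hcover⟩ := hK.finite_cover_balls (half_pos hε)
  have hnear : ∀ᶠ n in atTop, ∀ w ∈ t, (ball w (ε / 2) ∩ A n).Nonempty :=
    (eventually_all_finite ht).2 fun w hw =>
      hA (htK hw) _ isOpen_ball (mem_ball_self (half_pos hε))
  filter_upwards [hnear] with n hn x hx
  obtain ⟨w, hw, hxw⟩ := mem_iUnion₂.1 (hcover hx)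
  obtain ⟨z, hzw, hz⟩ := hn w hw
  refine mem_thickening_iff.2 ⟨z, hz, ?_⟩
  calc dist x z ≤ dist x w + dist z w := dist_triangle_right x z w
    _ < ε / 2 + ε / 2 := add_lt_add hxw hzw
    _ = ε := add_halves ε

theorem exists_tendsto_hausdorffDist {X : Type*} [PseudoMetricSpace X] [CompactSpace X]
    {A : ℕ → Set X} (hne : ∀ n, (A n).Nonempty) (hA : KLimsup A ⊆ KLiminf A) :
    ∃ L : Set X, L.Nonempty ∧ IsCompact L ∧
      Tendsto (fun n => hausdorffDist (A n) L) atTop (𝓝 0) := by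
  have hL : IsCompact (KLimsup A) := (isClosed_kLimsup A).isCompact
  refine ⟨KLimsup A, ?_, hL, ?_⟩
  · by_contra hempty
    obtain ⟨n, hn⟩ := (eventually_subset_of_kLimsup_subset isOpen_empty
      (not_nonempty_iff_eq_empty.1 hempty).subset).exists
    exact (hne n).not_subset_empty hn
  refine Metric.tendsto_nhds.2 fun ε hε => ?_
  have hε2 : 0 < ε / 2 := half_pos hε
  filter_upwards [eventually_subset_of_kLimsup_subset isOpen_thickening
      (self_subset_thickening hε2 (KLimsup A)),
    eventually_subset_thickening_of_subset_kLiminf hL hA hε2] with n hAL hLA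
  rw [Real.dist_0_eq_abs, abs_of_nonneg hausdorffDist_nonneg]
  refine (hausdorffDist_le_of_mem_dist hε2.le (fun x hx => ?_) fun x hx => ?_).trans_lt
    (half_lt_self hε)
  · obtain ⟨z, hz, hxz⟩ := mem_thickening_iff.1 (hAL hx)
    exact ⟨z, hz, hxz.le⟩
  · obtain ⟨z, hz, hxz⟩ := mem_thickening_iff.1 (hLA hx)
    exact ⟨z, hz, hxz.le⟩

end KuratowskiLimits

/-- The branch at `z` containing `x`: the connected component of `x` in the complement of `z`
(empty when `x = z`). Thus `y ∈ branch z x` says that `z` does not separate `x` from `y`. -/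
def branch {T : Type*} [TopologicalSpace T] (z x : T) : Set T :=
  connectedComponentIn {z}ᶜ x

section Branches

variable {T : Type*} [TopologicalSpace T] {x y z : T}

theorem self_notMem_branch : z ∉ branch z x := fun h => connectedComponentIn_subset _ _ h rfl

theorem notMem_branch_self : x ∉ branch z z := by
  simp [branch, connectedComponentIn_eq_empty]

theorem mem_branch_self (h : x ≠ z) : x ∈ branch z x := mem_connectedComponentIn h

theorem mem_branch_symm (h : y ∈ branch z x) : x ∈ branch z y := by
  have hxz : x ≠ z := by
    rintro rfl
    exact notMem_branch_self h
  rw [branch, ← connectedComponentIn_eq h]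
  exact mem_branch_self hxz

theorem branch_eq (h : y ∈ branch z x) : branch z y = branch z x := (connectedComponentIn_eq h).symm

theorem mem_branch_of_isPreconnected {C : Set T} (hC : IsPreconnected C) (hz : z ∉ C) (hx : x ∈ C)
    (hy : y ∈ C) : y ∈ branch z x :=
  hC.subset_connectedComponentIn hx (subset_compl_singleton_iff.2 hz) hy

theorem mem_branch_of_not_isCut (hz : ¬ IsCut z) (hx : x ≠ z) (hy : y ≠ z) : y ∈ branch z x :=
  mem_branch_of_isPreconnected (not_not.1 hz) (by simp) hx hy

variable [T1Space T] [LocallyConnectedSpace T]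

theorem isOpen_branch : IsOpen (branch z x) := isOpen_compl_singleton.connectedComponentIn

theorem isClosed_insert_branch : IsClosed (insert z (branch z x)) := by
  refine isClosed_of_closure_subset fun q hq => ?_
  rcases eq_or_ne q z with rfl | hqz
  · exact mem_insert _ _
  obtain ⟨r, hrq, rfl | hrx⟩ :=
    mem_closure_iff_nhds.1 hq _ (isOpen_branch.mem_nhds (mem_branch_self hqz))
  · exact (self_notMem_branch hrq).elim
  · rw [← branch_eq hrx, branch_eq hrq]
    exact mem_insert_of_mem _ (mem_branch_self hqz)

variable [ConnectedSpace T]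

theorem isPreconnected_insert_branch (h : x ≠ z) : IsPreconnected (insert z (branch z x)) := by
  have hz : z ∈ closure (branch z x) := by
    by_contra hz
    have hclosed : IsClosed (branch z x) := isClosed_of_closure_subset fun q hq =>
      (closure_minimal (subset_insert _ _) isClosed_insert_branch hq).resolve_left
        fun hqz => hz (hqz ▸ hq)
    have huniv : branch z x = univ :=
      IsClopen.eq_univ ⟨hclosed, isOpen_branch⟩ ⟨x, mem_branch_self h⟩
    exact self_notMem_branch (huniv ▸ mem_univ z)
  exact isPreconnected_connectedComponentIn.subset_closure (subset_insert _ _)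
    (insert_subset hz subset_closure)

theorem insert_branch_subset_branch {c d : T} (hd : d ≠ y) (hy : y ∈ branch x c)
    (hx : x ∉ insert y (branch y d)) : insert y (branch y d) ⊆ branch x c := fun _ hq =>
  branch_eq hy ▸ mem_branch_of_isPreconnected (isPreconnected_insert_branch hd) hx
    (mem_insert _ _) hq

theorem eventually_map_mem_branch {f : T → T} (hf : Continuous f) (hz : f z ≠ z) :
    ∀ᶠ x in 𝓝 z, x ≠ z → x ∉ branch z (f z) → f x ∈ branch x z := by
  filter_upwards [hf.continuousAt (isOpen_branch.mem_nhds (mem_branch_self hz))] with x hfx hxz hx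
  refine mem_branch_of_isPreconnected (isPreconnected_insert_branch hz) ?_ (mem_insert _ _)
    (mem_insert_of_mem _ hfx)
  rintro (h | h)
  exacts [hxz h, hx h]

end Branches

/-- A fixed point towards which `f` moves every cut point. -/
structure IsCutAttractor {T : Type*} [TopologicalSpace T] (f : T → T) (a : T) : Prop where
  fixed : f a = a
  map_mem_branch : ∀ x, IsCut x → f x ∈ branch x a

namespace IsCutAttractor

variable {T : Type*} [TopologicalSpace T] {f : T → T} {a : T}

theorem map_ne (h : IsCutAttractor f a) {x : T} (hx : IsCut x) : f x ≠ x := fun hfx =>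
  self_notMem_branch (hfx ▸ h.map_mem_branch x hx)

theorem not_isCut (h : IsCutAttractor f a) : ¬ IsCut a := fun hp => h.map_ne hp h.fixed

end IsCutAttractor

/-- `γ` parametrizes an arc (a point, if `a = b`) by `Icc a b`. Continuity is required on the whole
real line so that values at parameters slightly outside `Icc a b` need no separate treatment. -/
structure IsArcParam {T : Type*} [TopologicalSpace T] (γ : ℝ → T) (a b : ℝ) : Prop where
  continuous : Continuous γ
  injOn : InjOn γ (Icc a b)

/-- `p` and `q` are equal or are the endpoints of an arc contained in `U`. -/
def ArcJoined {T : Type*} [TopologicalSpace T] (U : Set T) (p q : T) : Prop :=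
  ∃ (γ : ℝ → T) (a b : ℝ), a ≤ b ∧ IsArcParam γ a b ∧ γ a = p ∧ γ b = q ∧ MapsTo γ (Icc a b) U

section Arcs

variable {T : Type*} [TopologicalSpace T]

theorem exists_first_mem {γ : ℝ → T} (hγ : Continuous γ) {a b : ℝ} (hab : a ≤ b) {C : Set T}
    (hC : IsClosed C) (hb : γ b ∈ C) :
    ∃ t ∈ Icc a b, γ t ∈ C ∧ ∀ s ∈ Icc a t, γ s ∈ C → s = t := by
  obtain ⟨t, ⟨ht, htC⟩, hmin⟩ :=
    (isCompact_Icc.inter_right (hC.preimage hγ)).exists_isLeast ⟨b, right_mem_Icc.2 hab, hb⟩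
  exact ⟨t, ht, htC, fun s hs hsC => hs.2.antisymm (hmin ⟨⟨hs.1, hs.2.trans ht.2⟩, hsC⟩)⟩

namespace IsArcParam

variable {γ : ℝ → T} {a b r s : ℝ}

theorem mono (hγ : IsArcParam γ a b) {c d : ℝ} (h : Icc c d ⊆ Icc a b) : IsArcParam γ c d :=
  ⟨hγ.continuous, hγ.injOn.mono h⟩

theorem comp (hγ : IsArcParam γ a b) {φ : ℝ → ℝ} (hφ : Continuous φ) (hinj : Function.Injective φ)
    {c d : ℝ} (h : MapsTo φ (Icc c d) (Icc a b)) : IsArcParam (γ ∘ φ) c d :=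
  ⟨hγ.continuous.comp hφ, hγ.injOn.comp hinj.injOn h⟩

theorem comp_neg (hγ : IsArcParam γ a b) : IsArcParam (γ ∘ Neg.neg) (-b) (-a) :=
  hγ.comp continuous_neg neg_injective fun _ ht => ⟨le_neg_of_le_neg ht.2, neg_le_of_neg_le ht.1⟩

theorem comp_add_const (hγ : IsArcParam γ a b) (c : ℝ) :
    IsArcParam (fun t => γ (t + c)) (a - c) (b - c) :=
  hγ.comp (φ := (· + c)) (by fun_prop) (add_left_injective c) fun _ ht =>
    ⟨sub_le_iff_le_add.1 ht.1, le_sub_iff_add_le.1 ht.2⟩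

theorem isPreconnected_image (hγ : IsArcParam γ a b) (c d : ℝ) : IsPreconnected (γ '' Icc c d) :=
  isPreconnected_Icc.image γ hγ.continuous.continuousOn

theorem isCompact_image (hγ : IsArcParam γ a b) (c d : ℝ) : IsCompact (γ '' Icc c d) :=
  isCompact_Icc.image hγ.continuous

theorem mem_branch_left (hγ : IsArcParam γ a b) (hr : r ∈ Ioc a b) (hs : s ∈ Ioc a b) :
    γ s ∈ branch (γ a) (γ r) := by
  have hsub : uIcc r s ⊆ Ioc a b := ordConnected_Ioc.uIcc_subset hr hs
  refine mem_branch_of_isPreconnected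
    (isPreconnected_uIcc.image γ hγ.continuous.continuousOn) ?_
    (mem_image_of_mem γ left_mem_uIcc) (mem_image_of_mem γ right_mem_uIcc)
  rintro ⟨t, ht, hta⟩
  have hlt : a < t := (hsub ht).1
  exact hlt.ne' (hγ.injOn (Ioc_subset_Icc_self (hsub ht)) ⟨le_rfl, hr.1.le.trans hr.2⟩ hta)

theorem concat {α β : ℝ → T} {c : ℝ} (hα : IsArcParam α a b) (hβ : IsArcParam β b c)
    (hb : α b = β b) (hmeet : ∀ s ∈ Icc a b, ∀ t ∈ Icc b c, α s = β t → s = b) :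
    IsArcParam (fun t => if t ≤ b then α t else β t) a c := by
  refine ⟨hα.continuous.if_le hβ.continuous continuous_id continuous_const
    fun t ht => by rw [show t = b from ht, hb], ?_⟩
  have hne : ∀ s ∈ Icc a b, ∀ t ∈ Ioc b c, α s ≠ β t := by
    intro s hs t ht hst
    have hsb : s = b := hmeet s hs t (Ioc_subset_Icc_self ht) hst
    rw [hsb, hb] at hst
    exact ht.1.ne (hβ.injOn ⟨le_rfl, ht.1.le.trans ht.2⟩ (Ioc_subset_Icc_self ht) hst)
  intro s hs t ht hst
  dsimp only at hst
  split_ifs at hst with hsb htb htb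
  · exact hα.injOn ⟨hs.1, hsb⟩ ⟨ht.1, htb⟩ hst
  · exact (hne s ⟨hs.1, hsb⟩ t ⟨not_le.1 htb, ht.2⟩ hst).elim
  · exact (hne t ⟨ht.1, htb⟩ s ⟨not_le.1 hsb, hs.2⟩ hst.symm).elim
  · exact hβ.injOn ⟨(not_le.1 hsb).le, hs.2⟩ ⟨(not_le.1 htb).le, ht.2⟩ hst

theorem isArcBetween [T2Space T] (hγ : IsArcParam γ a b) (hab : a < b) :
    IsArcBetween (γ '' Icc a b) (γ a) (γ b) := by
  have hemb : IsClosedEmbedding ((Icc a b).domRestrict γ) :=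
    (hγ.continuous.comp continuous_subtype_val).isClosedEmbedding hγ.injOn.injective
  refine ⟨(iccHomeoI a b hab).symm.trans
    (hemb.isEmbedding.toHomeomorph.trans (Homeomorph.setCongr (range_domRestrict γ _))), ?_, ?_⟩
  · change γ ((iccHomeoI a b hab).symm _) = γ a
    simp
  · change γ ((iccHomeoI a b hab).symm _) = γ b
    simp

theorem exists_of_homeomorph {A : Set T} (e : Icc (0 : ℝ) 1 ≃ₜ A) :
    ∃ γ, IsArcParam γ 0 1 ∧ γ '' Icc 0 1 = A ∧ ∀ t (ht : t ∈ Icc (0 : ℝ) 1), γ t = e ⟨t, ht⟩ := by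
  have hproj : ∀ t (ht : t ∈ Icc (0 : ℝ) 1), projIcc 0 1 zero_le_one t = ⟨t, ht⟩ := fun t ht =>
    projIcc_of_mem _ ht
  refine ⟨fun t => e (projIcc 0 1 zero_le_one t), ⟨by fun_prop, fun s hs t ht hst => ?_⟩, ?_,
    fun t ht => by simp only [hproj t ht]⟩
  · have := e.injective (Subtype.ext hst)
    rwa [hproj s hs, hproj t ht, Subtype.mk.injEq] at this
  · refine Subset.antisymm (image_subset_iff.2 fun t _ => Subtype.coe_prop _) fun x hx => ?_
    obtain ⟨t, ht⟩ := e.surjective ⟨x, hx⟩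
    exact ⟨t, t.2, by simp only [hproj t t.2, Subtype.coe_eta, ht]⟩

end IsArcParam

namespace ArcJoined

variable {U : Set T} {p q r : T}

theorem symm : ArcJoined U p q → ArcJoined U q p := by
  rintro ⟨γ, a, b, hab, hγ, rfl, rfl, hU⟩
  exact ⟨γ ∘ Neg.neg, -b, -a, neg_le_neg hab, hγ.comp_neg, by simp, by simp,
    fun t ht => hU ⟨le_neg_of_le_neg ht.2, neg_le_of_neg_le ht.1⟩⟩

theorem trans [T2Space T] : ArcJoined U p q → ArcJoined U q r → ArcJoined U p r := by
  rintro ⟨α, a, b, hab, hα, rfl, hαb, hαU⟩ ⟨β, c, d, hcd, hβ, hβc, rfl, hβU⟩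
  obtain ⟨t, ht, ⟨u, hu, hut⟩, hfirst⟩ := exists_first_mem hα.continuous hab
    (hβ.isCompact_image c d).isClosed ⟨c, left_mem_Icc.2 hcd, hβc.trans hαb.symm⟩
  have hβ' : IsArcParam (fun s => β (s + (u - t))) t (d - (u - t)) :=
    ((hβ.mono (Icc_subset_Icc_left hu.1)).comp_add_const (u - t)).mono
      (Icc_subset_Icc_left (by linarith))
  have hmaps : ∀ s ∈ Icc t (d - (u - t)), s + (u - t) ∈ Icc c d := fun s hs =>
    ⟨by linarith [hs.1, hu.1], by linarith [hs.2]⟩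
  refine ⟨_, a, d - (u - t), by linarith [ht.1, hu.2],
    (hα.mono (Icc_subset_Icc_right ht.2)).concat hβ' (by simp [hut]) fun s hs v hv hsv =>
      hfirst s hs ⟨_, hmaps v hv, hsv.symm⟩, if_pos ht.1, ?_, fun s hs => ?_⟩
  · split_ifs with hle
    · rw [show d - (u - t) = t by linarith [hu.2], ← hut, show u = d by linarith [hu.2]]
    · simp
  · dsimp only
    split_ifs with hst
    · exact hαU ⟨hs.1, hst.trans ht.2⟩
    · exact hβU (hmaps s ⟨(not_le.1 hst).le, hs.2⟩)

end ArcJoined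

namespace IsArcParam

variable {γ : ℝ → T} {a b r s : ℝ} {U : Set T}

theorem arcJoined (hγ : IsArcParam γ a b) (hr : r ∈ Icc a b) (hs : s ∈ Icc a b)
    (hU : MapsTo γ (uIcc r s) U) : ArcJoined U (γ r) (γ s) := by
  wlog hrs : r ≤ s generalizing r s
  · exact (this hs hr (uIcc_comm r s ▸ hU) (le_of_not_ge hrs)).symm
  rw [uIcc_of_le hrs] at hU
  exact ⟨γ, r, s, hrs, hγ.mono (Icc_subset_Icc hr.1 hs.2), rfl, rfl, hU⟩

theorem eventually_arcJoined (hγ : IsArcParam γ a b) (hU : IsOpen U) (hr : r ∈ Icc a b)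
    (hrU : γ r ∈ U) : ∀ᶠ s in 𝓝 r, s ∈ Icc a b → ArcJoined U (γ r) (γ s) := by
  have hsmall : Tendsto (fun s => uIcc r s) (𝓝 r) (𝓝 r).smallSets :=
    tendsto_const_nhds.uIcc tendsto_id
  filter_upwards [tendsto_smallSets_iff.1 hsmall _ ((hU.preimage hγ.continuous).mem_nhds hrU)]
    with s hs hsab using hγ.arcJoined hr hsab hs

end IsArcParam

end Arcs

/-- A uniquely arcwise connected, locally connected continuum, not necessarily metrizable. Unique
arcwise connectedness is expressed by saying that arcs exist and that every point inside an arc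
separates its endpoints. -/
class DendriteSpace (T : Type*) [TopologicalSpace T] : Prop extends CompactSpace T, T2Space T,
    ConnectedSpace T, LocallyConnectedSpace T where
  exists_arc : ∀ x y : T, x ≠ y → ∃ γ : ℝ → T, IsArcParam γ 0 1 ∧ γ 0 = x ∧ γ 1 = y
  notMem_branch : ∀ {γ : ℝ → T} {a b s : ℝ}, IsArcParam γ a b → s ∈ Icc a b →
    γ b ∉ branch (γ s) (γ a)

section Dendrites

variable {T : Type*} [TopologicalSpace T] [DendriteSpace T] {γ : ℝ → T} {a b s : ℝ}

open DendriteSpace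

namespace IsArcParam

theorem notMem_branch (hγ : IsArcParam γ a b) (hs : s ∈ Icc a b) : γ b ∉ branch (γ s) (γ a) :=
  DendriteSpace.notMem_branch hγ hs

theorem image_subset_of_isPreconnected (hγ : IsArcParam γ a b) {C : Set T} (hC : IsPreconnected C)
    (ha : γ a ∈ C) (hb : γ b ∈ C) : γ '' Icc a b ⊆ C := by
  rintro _ ⟨s, hs, rfl⟩
  by_contra hsC
  exact hγ.notMem_branch hs (mem_branch_of_isPreconnected hC hsC ha hb)

theorem isCut (hγ : IsArcParam γ a b) (hs : s ∈ Ioo a b) : IsCut (γ s) := fun hpre =>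
  hγ.notMem_branch (Ioo_subset_Icc_self hs) <| mem_branch_of_not_isCut (not_not.2 hpre)
    (fun h => hs.1.ne (hγ.injOn ⟨le_rfl, (hs.1.trans hs.2).le⟩ (Ioo_subset_Icc_self hs) h))
    fun h => hs.2.ne' (hγ.injOn ⟨(hs.1.trans hs.2).le, le_rfl⟩ (Ioo_subset_Icc_self hs) h)

end IsArcParam

theorem exists_isCompact_isPreconnected_of_mem_branch {x y z : T} (hy : y ∈ branch z x) :
    ∃ K, z ∉ K ∧ IsCompact K ∧ IsPreconnected K ∧ x ∈ K ∧ y ∈ K := by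
  have hx : x ∈ branch z x := branch_eq (mem_branch_symm hy) ▸ mem_branch_symm hy
  rcases eq_or_ne x y with rfl | hxy
  · exact ⟨{x}, fun h => self_notMem_branch (h ▸ hx), isCompact_singleton, isPreconnected_singleton,
      rfl, rfl⟩
  obtain ⟨γ, hγ, rfl, rfl⟩ := exists_arc x y hxy
  refine ⟨γ '' Icc 0 1, fun hz => ?_, hγ.isCompact_image 0 1, hγ.isPreconnected_image 0 1,
    ⟨0, by simp⟩, ⟨1, by simp⟩⟩
  exact self_notMem_branch (hγ.image_subset_of_isPreconnected
    isPreconnected_connectedComponentIn hx hy hz)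

theorem isOpen_setOf_mem_branch (x : T) : IsOpen {p : T × T | p.2 ∈ branch p.1 x} := by
  refine isOpen_iff_mem_nhds.2 fun ⟨z, y⟩ hy => ?_
  obtain ⟨K, hzK, hKc, hK, hxK, hyK⟩ := exists_isCompact_isPreconnected_of_mem_branch hy
  obtain ⟨V, W, hV, hW, hKV, hzW, hVW⟩ := hKc.separation_of_notMem hzK
  have hyN : y ∈ connectedComponentIn V y := mem_connectedComponentIn (hKV hyK)
  filter_upwards [prod_mem_nhds (hW.mem_nhds hzW) (hV.connectedComponentIn.mem_nhds hyN)]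
  rintro ⟨z', y'⟩ ⟨hz', hy'⟩
  refine mem_branch_of_isPreconnected (hK.union y hyK hyN isPreconnected_connectedComponentIn)
    ?_ (Or.inl hxK) (Or.inr hy')
  exact fun h => disjoint_left.1 hVW (union_subset hKV (connectedComponentIn_subset V y) h) hz'

theorem exists_image_subset_of_isPreconnected (hγ : IsArcParam γ 0 1) (h0 : ¬ IsCut (γ 0))
    {C : Set T} (hC : IsPreconnected C) (hCn : C.Nontrivial) (h0C : γ 0 ∈ C) :
    ∃ s ∈ Ioo (0 : ℝ) 1, γ '' Icc 0 s ⊆ C := by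
  obtain ⟨q, hqC, hq⟩ := hCn.exists_ne (γ 0)
  have h01 : γ 1 ≠ γ 0 := fun h => one_ne_zero (hγ.injOn (by simp) (by simp) h)
  have hev : ∀ᶠ s in 𝓝[>] 0, q ∈ branch (γ s) (γ 1) :=
    ((Continuous.prodMk hγ.continuous continuous_const).continuousAt.eventually
      ((isOpen_setOf_mem_branch (γ 1)).mem_nhds
        (mem_branch_of_not_isCut h0 h01 hq))).filter_mono nhdsWithin_le_nhds
  obtain ⟨s, hsq, hs⟩ := (hev.and (Ioo_mem_nhdsGT one_pos)).exists
  refine ⟨s, hs, (hγ.mono (Icc_subset_Icc_right hs.2.le)).image_subset_of_isPreconnected hC h0C ?_⟩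
  by_contra hsC
  have h0q : q ∈ branch (γ s) (γ 0) := mem_branch_of_isPreconnected hC hsC h0C hqC
  exact hγ.notMem_branch (Ioo_subset_Icc_self hs) (branch_eq h0q ▸ mem_branch_symm hsq)

theorem exists_tendsto_of_mem_branch {η : ℝ → T} (hη : IsArcParam η 0 1) {u : ℕ → T}
    (hu : ∀ m n, m < n → u n ∈ branch (u m) (η 0)) :
    ∃ y, (y = η 0 ∨ IsCut y) ∧ Tendsto u (atTop ⊓ 𝓟 {n | u n ∈ η '' Icc 0 1}) (𝓝 y) := by
  let I : Set ℕ := {n | u n ∈ η '' Icc 0 1}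
  rcases I.finite_or_infinite with hI | hI
  · refine ⟨η 0, Or.inl rfl, ?_⟩
    have hbot : atTop ⊓ 𝓟 I = ⊥ := by
      rw [inf_principal_eq_bot, ← Nat.cofinite_eq_atTop]
      exact hI.compl_mem_cofinite
    exact hbot ▸ tendsto_bot
  choose! σ hσ hησ using show ∀ n ∈ I, ∃ t, t ∈ Icc (0 : ℝ) 1 ∧ η t = u n from fun n hn => hn
  have hanti : StrictAntiOn σ I := by
    intro m hm n hn hmn
    by_contra! hle
    refine (hη.mono (Icc_subset_Icc_right (hσ n hn).2)).notMem_branch ⟨(hσ m hm).1, hle⟩ ?_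
    rw [hησ m hm, hησ n hn]
    exact hu m n hmn
  have hbdd : BddBelow (σ '' I) := ⟨0, forall_mem_image.2 fun n hn => (hσ n hn).1⟩
  obtain ⟨m, hm⟩ := hI.nonempty
  obtain ⟨n, hn, hmn⟩ := hI.exists_gt m
  have hc0 : 0 ≤ sInf (σ '' I) :=
    le_csInf (hI.nonempty.image σ) (forall_mem_image.2 fun n hn => (hσ n hn).1)
  have hc1 : sInf (σ '' I) < 1 :=
    (csInf_le hbdd (mem_image_of_mem σ hn)).trans_lt ((hanti hm hn hmn).trans_le (hσ m hm).2)
  refine ⟨η (sInf (σ '' I)), ?_, ?_⟩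
  · rcases hc0.eq_or_lt with h | h
    · exact Or.inl (by rw [← h])
    · exact Or.inr (hη.isCut ⟨h, hc1⟩)
  · refine ((hη.continuous.tendsto _).comp
      (tendsto_csInf_of_antitoneOn hanti.antitoneOn hI.nonempty hbdd)).congr' ?_
    filter_upwards [mem_inf_of_right (mem_principal_self I)] with n hn using hησ n hn

theorem eventually_map_mem_branch_param {f : T → T} (hf : Continuous f) (hγ : IsArcParam γ a b)
    (hab : a < b) (hne : f (γ a) ≠ γ a) (hb : f (γ a) ∉ branch (γ a) (γ b)) :
    ∀ᶠ s in 𝓝[>] a, f (γ s) ∈ branch (γ s) (γ a) := by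
  filter_upwards [(hγ.continuous.continuousAt.eventually
      (eventually_map_mem_branch hf hne)).filter_mono nhdsWithin_le_nhds, Ioc_mem_nhdsGT hab]
    with s hs hsab
  refine hs (fun h => hsab.1.ne'
    (hγ.injOn (Ioc_subset_Icc_self hsab) (left_mem_Icc.2 hab.le) h)) fun hsf => hb ?_
  rw [branch_eq (hγ.mem_branch_left hsab ⟨hab, le_rfl⟩)]
  exact mem_branch_symm hsf

theorem mem_branch_or_mem_branch {f : T → T} (hf : Continuous f)
    (hfix : ∀ x, IsCut x → f x ≠ x) {x y : T} (hx : IsCut x) (hy : IsCut y) (hxy : x ≠ y) :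
    y ∈ branch x (f x) ∨ x ∈ branch y (f y) := by
  by_contra! ⟨hyx, hxy'⟩
  obtain ⟨γ, hγ, rfl, rfl⟩ := exists_arc x y hxy
  have hS : Icc (0 : ℝ) 1 ⊆ {t | f (γ t) ∈ branch (γ t) (γ 1)}ᶜ := by
    have hopen : IsOpen {t | f (γ t) ∈ branch (γ t) (γ 1)} :=
      (isOpen_setOf_mem_branch (γ 1)).preimage (hγ.continuous.prodMk (hf.comp hγ.continuous))
    refine IsClosed.Icc_subset_of_forall_mem_nhdsWithin (hopen.isClosed_compl.inter isClosed_Icc)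
      (fun h => hyx (mem_branch_symm h)) fun t ⟨htS, ht⟩ => ?_
    have htcut : IsCut (γ t) := by
      rcases ht.1.eq_or_lt with rfl | ht0
      exacts [hx, hγ.isCut ⟨ht0, ht.2⟩]
    have hγt : IsArcParam γ t 1 := hγ.mono (Icc_subset_Icc_left ht.1)
    filter_upwards [eventually_map_mem_branch_param hf hγt ht.2 (hfix _ htcut) htS,
      Ioo_mem_nhdsGT ht.2] with s hst hs hs1
    exact hγt.notMem_branch (Ioo_subset_Icc_self hs) (branch_eq hst ▸ mem_branch_symm hs1)
  have hend := eventually_map_mem_branch_param hf hγ.comp_neg (neg_lt_neg one_pos)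
    (by simpa using hfix _ hy) (by simpa using fun h => hxy' (mem_branch_symm h))
  obtain ⟨s, hs, hs01⟩ := (hend.and (Ioc_mem_nhdsGT (neg_lt_neg one_pos))).exists
  simp only [Function.comp_apply, neg_neg] at hs
  exact hS ⟨le_neg_of_le_neg (by simpa using hs01.2), neg_le_of_neg_le hs01.1.le⟩ hs

theorem exists_forall_mem_insert_branch {f : T → T} (hf : Continuous f)
    (hfix : ∀ x, IsCut x → f x ≠ x) : ∃ p, ∀ x, IsCut x → p ∈ insert x (branch x (f x)) := by
  let B : {x : T // IsCut x} → Set T := fun x => insert x.1 (branch x.1 (f x.1))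
  suffices h : (⋂ x, B x).Nonempty by
    obtain ⟨p, hp⟩ := h
    exact ⟨p, fun x hx => mem_iInter.1 hp ⟨x, hx⟩⟩
  refine CompactSpace.iInter_nonempty (fun x => isClosed_insert_branch) fun s => ?_
  rcases s.eq_empty_or_nonempty with rfl | hs
  · simp
  -- A minimal `B x` is contained in every other `B y`, so its vertex `x` is a common point.
  obtain ⟨x, -, hmin⟩ := s.exists_minimalFor B hs
  refine ⟨x, mem_iInter₂.2 fun y hy => ?_⟩
  by_contra hxy
  have hyx : y.1 ∈ branch x.1 (f x.1) :=
    (mem_branch_or_mem_branch hf hfix x.2 y.2 fun h => hxy (h ▸ mem_insert _ _)).resolve_right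
      fun h => hxy (mem_insert_of_mem _ h)
  exact hxy (hmin hy ((insert_branch_subset_branch (hfix _ y.2) hyx hxy).trans
    (subset_insert _ _)) (mem_insert _ _))

theorem map_eq_self_of_forall_mem_insert_branch {f : T → T} (hf : Continuous f) {p : T}
    (hp : ∀ x, IsCut x → p ∈ insert x (branch x (f x))) : f p = p := by
  by_contra hfp
  obtain ⟨γ, hγ, rfl, hγ1⟩ := exists_arc p (f p) (Ne.symm hfp)
  have hev : ∀ᶠ s in 𝓝[>] (0 : ℝ), f (γ s) ∈ branch (γ s) (γ 1) := by
    have hcont : Continuous fun s => (γ s, f (γ s)) :=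
      hγ.continuous.prodMk (hf.comp hγ.continuous)
    refine (hcont.continuousAt.eventually ((isOpen_setOf_mem_branch (γ 1)).mem_nhds ?_)).filter_mono
      nhdsWithin_le_nhds
    simpa only [mem_ofPred_eq, hγ1] using mem_branch_self hfp
  obtain ⟨s, hs, hs01⟩ := (hev.and (Ioo_mem_nhdsGT one_pos)).exists
  have h0s : γ 0 ≠ γ s := fun h =>
    hs01.1.ne (hγ.injOn (by simp) (Ioo_subset_Icc_self hs01) h)
  have h0 : γ 0 ∈ branch (γ s) (γ 1) := branch_eq hs ▸ (hp _ (hγ.isCut hs01)).resolve_left h0s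
  exact hγ.notMem_branch (Ioo_subset_Icc_self hs01) (mem_branch_symm h0)

theorem exists_isCutAttractor {f : T → T} (hf : Continuous f) (hfix : ∀ x, IsCut x → f x ≠ x) :
    ∃ p, IsCutAttractor f p := by
  obtain ⟨p, hp⟩ := exists_forall_mem_insert_branch hf hfix
  have hfp : f p = p := map_eq_self_of_forall_mem_insert_branch hf hp
  exact ⟨p, hfp, fun x hx => mem_branch_symm
    ((hp x hx).resolve_left fun h => hfix x hx (h ▸ hfp))⟩

end Dendrites

/-- A dendrite that is a finite union of arcs: a nondegenerate tree. -/
class FiniteDendriteSpace (T : Type*) [TopologicalSpace T] : Prop extends DendriteSpace T where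
  exists_finite_cover : ∃ S : Set (ℝ → T), S.Finite ∧ (∀ η ∈ S, IsArcParam η 0 1) ∧
    ∀ x, ∃ η ∈ S, x ∈ η '' Icc 0 1

section FiniteDendrites

open DendriteSpace FiniteDendriteSpace

variable {T : Type*} [TopologicalSpace T] [FiniteDendriteSpace T]

instance FiniteDendriteSpace.nontrivial : Nontrivial T := by
  obtain ⟨S, -, hS, hcover⟩ := exists_finite_cover (T := T)
  obtain ⟨x⟩ : Nonempty T := inferInstance
  obtain ⟨η, hη, -⟩ := hcover x
  exact ⟨η 0, η 1, fun h => zero_ne_one ((hS η hη).injOn (by simp) (by simp) h)⟩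

theorem finite_setOf_not_isCut : {x : T | ¬ IsCut x}.Finite := by
  obtain ⟨S, hSfin, hS, hcover⟩ := exists_finite_cover (T := T)
  refine ((hSfin.image fun η => η 0).union (hSfin.image fun η => η 1)).subset fun x hx => ?_
  obtain ⟨η, hη, t, ht, rfl⟩ := hcover x
  rcases ht.1.eq_or_lt with rfl | h0
  · exact Or.inl ⟨η, hη, rfl⟩
  rcases ht.2.eq_or_lt with rfl | h1
  · exact Or.inr ⟨η, hη, rfl⟩
  · exact (hx ((hS η hη).isCut ⟨h0, h1⟩)).elim

theorem exists_finite_rooted_cover (a : T) :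
    ∃ S : Set (ℝ → T), S.Finite ∧ (∀ η ∈ S, IsArcParam η 0 1 ∧ η 0 = a) ∧
      ∀ x, x ≠ a → ∃ η ∈ S, x ∈ η '' Icc 0 1 := by
  obtain ⟨S, hSfin, hS, hcover⟩ := exists_finite_cover (T := T)
  choose! γ hγ hγ0 hγ1 using exists_arc a
  let E : Set T := ((fun η : ℝ → T => η 0) '' S ∪ (fun η : ℝ → T => η 1) '' S) \ {a}
  have hE : E.Finite := ((hSfin.image _).union (hSfin.image _)).subset sdiff_subset
  refine ⟨γ '' E, hE.image γ, ?_, fun x hxa => ?_⟩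
  · rintro _ ⟨b, hb, rfl⟩
    exact ⟨hγ b (Ne.symm hb.2), hγ0 b (Ne.symm hb.2)⟩
  by_contra! hx
  have hbranch : ∀ b, (b ≠ a → b ∈ E) → b ∈ branch x a := by
    intro b hb
    rcases eq_or_ne b a with rfl | hba
    · exact mem_branch_self (Ne.symm hxa)
    · exact mem_branch_of_isPreconnected ((hγ b hba.symm).isPreconnected_image 0 1)
        (hx _ ⟨b, hb hba, rfl⟩) ⟨0, by simp, hγ0 b hba.symm⟩ ⟨1, by simp, hγ1 b hba.symm⟩
  obtain ⟨η, hη, t, ht, rfl⟩ := hcover x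
  have h0 : η 0 ∈ branch (η t) a := hbranch _ fun h => ⟨Or.inl ⟨η, hη, rfl⟩, h⟩
  have h1 : η 1 ∈ branch (η t) a := hbranch _ fun h => ⟨Or.inr ⟨η, hη, rfl⟩, h⟩
  exact (hS η hη).notMem_branch ht (branch_eq h0 ▸ h1)

theorem mem_nhds_of_isPreconnected {e : T} (he : ¬ IsCut e) {C : Set T} (hC : IsPreconnected C)
    (hCn : C.Nontrivial) (heC : e ∈ C) : C ∈ 𝓝 e := by
  obtain ⟨S, hSfin, hS, hcover⟩ := exists_finite_rooted_cover e
  have hnear : ∀ η ∈ S, ∀ᶠ q in 𝓝 e, q ∈ η '' Icc 0 1 → q ∈ C := by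
    intro η hη
    obtain ⟨hη, rfl⟩ := hS η hη
    obtain ⟨s, hs, hsC⟩ := exists_image_subset_of_isPreconnected hη he hC hCn heC
    have hlt : ∀ᶠ q in 𝓝 (η 0), ∀ t ∈ Icc (0 : ℝ) 1, η t = q → t < s :=
      eventually_forall_eq_imp hη.continuous isCompact_Icc fun r hr hr0 =>
        eventually_lt_nhds (hη.injOn hr (by simp) hr0 ▸ hs.1)
    filter_upwards [hlt] with q hq ⟨t, ht, htq⟩
    exact hsC ⟨t, ⟨ht.1, (hq t ht htq).le⟩, htq⟩
  filter_upwards [(eventually_all_finite hSfin).2 hnear] with q hq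
  rcases eq_or_ne q e with rfl | hqe
  · exact heC
  · obtain ⟨η, hη, hqη⟩ := hcover q hqe
    exact hq η hη hqη

theorem IsArcParam.image_mem_nhds {γ : ℝ → T} {a b : ℝ} (hγ : IsArcParam γ a b) (hab : a < b)
    (ha : ¬ IsCut (γ a)) : γ '' Icc a b ∈ 𝓝 (γ a) :=
  mem_nhds_of_isPreconnected ha (hγ.isPreconnected_image a b)
    (Set.Nontrivial.image_of_injOn
      ⟨a, left_mem_Icc.2 hab.le, b, right_mem_Icc.2 hab.le, hab.ne⟩ hγ.injOn)
    ⟨a, left_mem_Icc.2 hab.le, rfl⟩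

namespace IsCutAttractor

variable {f : T → T} {a : T}

theorem exists_forall_mapsTo (hf : Continuous f) {γ : ℝ → T} (hγ : IsArcParam γ 0 1)
    (h : IsCutAttractor f (γ 0)) :
    ∃ s₀ ∈ Ioo (0 : ℝ) 1, ∀ s ∈ Icc 0 s₀, MapsTo f (γ '' Icc 0 s) (γ '' Icc 0 s) := by
  have hnhds : γ '' Icc 0 1 ∈ 𝓝 (f (γ 0)) := by
    rw [h.fixed]
    exact hγ.image_mem_nhds one_pos h.not_isCut
  have hev : ∀ᶠ s in 𝓝[≥] (0 : ℝ), f (γ s) ∈ γ '' Icc 0 1 :=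
    ((hf.comp hγ.continuous).continuousAt.eventually hnhds).filter_mono nhdsWithin_le_nhds
  obtain ⟨s₀, hs₀, hsub⟩ :=
    mem_nhdsGE_iff_exists_Icc_subset.1 (hev.and (Ico_mem_nhdsGE one_pos))
  have hs₀1 : s₀ < 1 := (hsub (right_mem_Icc.2 (mem_Ioi.1 hs₀).le)).2.2
  refine ⟨s₀, ⟨hs₀, hs₀1⟩, ?_⟩
  rintro s hs _ ⟨r, hr, rfl⟩
  rcases hr.1.eq_or_lt with rfl | hr0
  · exact ⟨0, hr, h.fixed.symm⟩
  obtain ⟨r', hr', hfr⟩ := (hsub ⟨hr.1, hr.2.trans hs.2⟩).1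
  refine ⟨r', ⟨hr'.1, le_trans ?_ hr.2⟩, hfr⟩
  by_contra! hlt
  refine (hγ.mono (Icc_subset_Icc_right hr'.2)).notMem_branch ⟨hr.1, hlt.le⟩ ?_
  rw [hfr]
  exact h.map_mem_branch _ (hγ.isCut ⟨hr0, hlt.trans_le hr'.2⟩)

theorem eventually_forall_iterate_mem (hf : Continuous f) (h : IsCutAttractor f a) {G : Set T}
    (hG : G ∈ 𝓝 a) : ∀ᶠ x in 𝓝 a, ∀ n, f^[n] x ∈ G := by
  obtain ⟨b, hb⟩ := exists_ne a
  obtain ⟨γ, hγ, rfl, -⟩ := exists_arc a b hb.symm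
  obtain ⟨s₀, hs₀, hmaps⟩ := h.exists_forall_mapsTo hf hγ
  obtain ⟨u, hu, huG⟩ := mem_nhdsGE_iff_exists_Icc_subset.1
    (hγ.continuous.continuousWithinAt.preimage_mem_nhdsWithin hG)
  have hs : 0 < min s₀ u := lt_min hs₀.1 hu
  have hnhds : γ '' Icc 0 (min s₀ u) ∈ 𝓝 (γ 0) :=
    (hγ.mono (Icc_subset_Icc_right ((min_le_left _ _).trans hs₀.2.le))).image_mem_nhds hs
      h.not_isCut
  filter_upwards [hnhds] with x hx n
  obtain ⟨t, ht, htx⟩ := (hmaps _ ⟨hs.le, min_le_left _ _⟩).iterate n hx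
  rw [← htx]
  exact huG ⟨ht.1, ht.2.trans (min_le_right _ _)⟩

theorem iterate (hf : Continuous f) (hcut : ∀ x, IsCut x → ∀ m, 1 ≤ m → f^[m] x ≠ x)
    (h : IsCutAttractor f a) {m : ℕ} (hm : 1 ≤ m) : IsCutAttractor f^[m] a := by
  obtain ⟨b, hb⟩ := exists_isCutAttractor (hf.iterate m) fun x hx => hcut x hx m hm
  rcases eq_or_ne a b with rfl | hab
  · exact hb
  obtain ⟨γ, hγ, rfl, rfl⟩ := exists_arc a b hab
  obtain ⟨s, hs, hmaps⟩ := h.exists_forall_mapsTo hf hγ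
  obtain ⟨t, ht, hts⟩ := (hmaps s ⟨hs.1.le, le_rfl⟩).iterate m ⟨s, ⟨hs.1.le, le_rfl⟩, rfl⟩
  have hmem : f^[m] (γ s) ∈ branch (γ s) (γ 1) := hb.map_mem_branch _ (hγ.isCut hs)
  rw [← hts] at hmem
  exact ((hγ.mono (Icc_subset_Icc_left ht.1)).notMem_branch ⟨ht.2, hs.2.le⟩
    (mem_branch_symm hmem)).elim

theorem exists_expanding_nhdsWithin (hf : Continuous f) (h : IsCutAttractor f a) {e : T}
    (he : f e = e) (hea : e ≠ a) {C : Set T} (hC : IsPreconnected C) (heC : e ∈ C) :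
    ∃ J ∈ 𝓝[C] e, J ⊆ C ∧ J ⊆ f '' J := by
  rcases C.subsingleton_or_nontrivial with hsub | hCn
  · refine ⟨C, self_mem_nhdsWithin, Subset.rfl, fun x hx => ⟨e, heC, ?_⟩⟩
    rw [he, hsub heC hx]
  have hecut : ¬ IsCut e := fun hcut => h.map_ne hcut he
  obtain ⟨γ, hγ, rfl, rfl⟩ := exists_arc e a hea
  obtain ⟨s, hs, hJC⟩ := exists_image_subset_of_isPreconnected hγ hecut hC hCn heC
  have hγs : IsArcParam γ 0 s := hγ.mono (Icc_subset_Icc_right hs.2.le)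
  have hpre : IsPreconnected (f '' (γ '' Icc 0 s)) :=
    (hγ.isPreconnected_image 0 s).image f hf.continuousOn
  have h0 : γ 0 ∈ f '' (γ '' Icc 0 s) := ⟨γ 0, ⟨0, ⟨le_rfl, hs.1.le⟩, rfl⟩, he⟩
  refine ⟨γ '' Icc 0 s, mem_nhdsWithin_of_mem_nhds (hγs.image_mem_nhds hs.1 hecut), hJC,
    hγs.image_subset_of_isPreconnected hpre h0 ?_⟩
  by_contra hsJ
  have hfs0 : f (γ s) ∈ branch (γ s) (γ 0) := mem_branch_of_isPreconnected hpre hsJ h0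
    ⟨γ s, ⟨s, ⟨hs.1.le, le_rfl⟩, rfl⟩, rfl⟩
  have hfs1 : f (γ s) ∈ branch (γ s) (γ 1) := h.map_mem_branch _ (hγ.isCut hs)
  exact hγ.notMem_branch (Ioo_subset_Icc_self hs) (branch_eq hfs0 ▸ mem_branch_symm hfs1)

end IsCutAttractor

theorem exists_finite_tendsto_nhdsSet_of_mem_branch {a : T} {u : ℕ → T}
    (hu : ∀ m n, m < n → u n ∈ branch (u m) a) :
    ∃ F : Set T, F.Finite ∧ (∀ y ∈ F, y = a ∨ IsCut y) ∧ Tendsto u atTop (𝓝ˢ F) := by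
  obtain ⟨S, hSfin, hS, hcover⟩ := exists_finite_rooted_cover a
  have hlim : ∀ η ∈ S, ∃ y, (y = a ∨ IsCut y) ∧
      Tendsto u (atTop ⊓ 𝓟 {n | u n ∈ η '' Icc 0 1}) (𝓝 y) := by
    intro η hη
    obtain ⟨hη, rfl⟩ := hS η hη
    exact exists_tendsto_of_mem_branch hη hu
  choose! y hya hy using hlim
  refine ⟨y '' S, hSfin.image y, forall_mem_image.2 hya, fun G hG => mem_map.2 ?_⟩
  have hmem : ∀ η ∈ S, ∀ᶠ n in atTop, u n ∈ η '' Icc 0 1 → u n ∈ G := fun η hη =>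
    eventually_inf_principal.1 (hy η hη (nhds_le_nhdsSet (mem_image_of_mem y hη) hG))
  filter_upwards [(eventually_all_finite hSfin).2 hmem] with n hn
  have hna : u n ≠ a := fun h => notMem_branch_self (h ▸ hu n (n + 1) n.lt_succ_self)
  obtain ⟨η, hη, hnη⟩ := hcover _ hna
  exact hn η hη hnη

section OrbitsOfIterates

variable {g : T → T} {a : T}

theorem mapClusterPt_or_exists_iterate_eq (hg : Continuous g)
    (hper : ∀ x ∈ Function.periodicPts g, g x = x)
    (hatt : ∀ m, 1 ≤ m → IsCutAttractor g^[m] a) (x : T) :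
    MapClusterPt a atTop (fun n => g^[n] x) ∨ ∃ N, g (g^[N] x) = g^[N] x ∧ g^[N] x ≠ a := by
  by_cases hinj : Function.Injective fun n => g^[n] x
  · left
    obtain ⟨N, hN⟩ : ∃ N, ∀ n ≥ N, IsCut (g^[n] x) := by
      have hev := (hinj.tendsto_cofinite.eventually
        finite_setOf_not_isCut.compl_mem_cofinite)
      rw [Nat.cofinite_eq_atTop] at hev
      simpa only [mem_compl_iff, mem_ofPred_eq, not_not] using eventually_atTop.1 hev
    have hbranch : ∀ m n, m < n → g^[n] (g^[N] x) ∈ branch (g^[m] (g^[N] x)) a := by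
      intro m n hmn
      have hcut : IsCut (g^[m] (g^[N] x)) := by
        rw [← Function.iterate_add_apply]
        exact hN _ (Nat.le_add_left N m)
      simpa only [← Function.iterate_add_apply, Nat.sub_add_cancel hmn.le, ← Nat.add_assoc] using
        (hatt (n - m) (Nat.sub_pos_of_lt hmn)).map_mem_branch _ hcut
    obtain ⟨F, hF, hFa, htend⟩ := exists_finite_tendsto_nhdsSet_of_mem_branch hbranch
    obtain ⟨z, hzF, hz, hzper⟩ := exists_mapClusterPt_mem_periodicPts hg hF htend
    have hza : z = a := (hFa z hzF).resolve_right fun hcut =>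
      (hatt 1 le_rfl).map_ne hcut (hper z hzper)
    have hcomp : MapClusterPt a atTop ((fun n => g^[n] x) ∘ fun n => n + N) := by
      simpa only [hza, Function.comp_def, ← Function.iterate_add_apply] using hz
    exact hcomp.of_comp (tendsto_add_atTop_nat N)
  · obtain ⟨N, hN⟩ := exists_iterate_mem_periodicPts hinj
    rcases eq_or_ne (g^[N] x) a with hNa | hNa
    · have hconst : (fun n => g^[n] x) ∘ (fun n => n + N) = fun _ => a := by
        funext n
        rw [Function.comp_apply, Function.iterate_add_apply, hNa]
        exact Function.iterate_fixed (hatt 1 le_rfl).fixed n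
      refine Or.inl (MapClusterPt.of_comp (tendsto_add_atTop_nat N) ?_)
      exact (hconst ▸ tendsto_const_nhds).mapClusterPt
    · exact Or.inr ⟨N, hper _ hN, hNa⟩

theorem kLimsup_iterate_image_subset_kLiminf (hg : Continuous g)
    (hper : ∀ x ∈ Function.periodicPts g, g x = x)
    (hatt : ∀ m, 1 ≤ m → IsCutAttractor g^[m] a) {A : Set T} (hAc : IsCompact A)
    (hA : IsPreconnected A) :
    KLimsup (fun n => g^[n] '' A) ⊆ KLiminf fun n => g^[n] '' A := by
  have hatt₁ : IsCutAttractor g a := hatt 1 le_rfl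
  refine kLimsup_image_subset_kLiminf hAc fun x hx => ?_
  rcases mapClusterPt_or_exists_iterate_eq hg hper hatt x with hcl | ⟨N, hfix, hNa⟩
  · have hlim := tendsto_iterate_of_mapClusterPt hg
      (fun G hG => hatt₁.eventually_forall_iterate_mem hg hG) hcl
    exact Or.inl ⟨a, hlim.mono_left (prod_mono_right _ nhdsWithin_le_nhds)⟩
  · obtain ⟨J, hJ, hJA, hJg⟩ := hatt₁.exists_expanding_nhdsWithin hg hfix hNa
      (hA.image _ (hg.iterate N).continuousOn) (mem_image_of_mem _ hx)
    have hiter : ∀ n ≥ N, ∀ B : Set T, g^[n] '' B = g^[n - N] '' (g^[N] '' B) := by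
      intro n hn B
      rw [← image_comp, ← Function.iterate_add, Nat.sub_add_cancel hn]
    refine Or.inr ⟨g^[N] ⁻¹' J,
      (hg.iterate N).continuousWithinAt.tendsto_nhdsWithin (mapsTo_image _ _) hJ, N,
      fun n hn m hm => ?_⟩
    calc g^[n] '' (g^[N] ⁻¹' J) = g^[n - N] '' (g^[N] '' (g^[N] ⁻¹' J)) := hiter n hn _
      _ ⊆ g^[n - N] '' J := image_mono (image_preimage_subset _ _)
      _ ⊆ g^[m - N] '' J := monotone_iterate_image hJg (Nat.sub_le_sub_right hm N)
      _ ⊆ g^[m - N] '' (g^[N] '' A) := image_mono hJA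
      _ = g^[m] '' A := (hiter m (hn.trans hm) A).symm

end OrbitsOfIterates

end FiniteDendrites

theorem eventually_arcJoined_of_finite_cover {T : Type*} [TopologicalSpace T] [T2Space T]
    {S : Set (ℝ → T)} (hSfin : S.Finite) (hS : ∀ η ∈ S, IsArcParam η 0 1)
    (hcover : ∀ x, ∃ η ∈ S, x ∈ η '' Icc 0 1) {U : Set T} (hU : IsOpen U) {p : T} (hp : p ∈ U) :
    ∀ᶠ q in 𝓝 p, ArcJoined U p q := by
  have hnear : ∀ η ∈ S, ∀ᶠ q in 𝓝 p, ∀ t ∈ Icc (0 : ℝ) 1, η t = q →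
      t ∈ Icc (0 : ℝ) 1 → ArcJoined U p (η t) := by
    refine fun η hη => eventually_forall_eq_imp (hS η hη).continuous isCompact_Icc ?_
    rintro r hr rfl
    exact (hS η hη).eventually_arcJoined hU hr hp
  filter_upwards [(eventually_all_finite hSfin).2 hnear] with q hq
  obtain ⟨η, hη, t, ht, rfl⟩ := hcover q
  exact hq η hη t ht rfl ht

namespace ArcJoined

variable {T : Type*} [TopologicalSpace T]

theorem mem_connectedComponentIn {U : Set T} {p q : T} (h : ArcJoined U p q) :
    q ∈ connectedComponentIn U p := by
  obtain ⟨γ, a, b, hab, hγ, rfl, rfl, hU⟩ := h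
  exact (hγ.isPreconnected_image a b).subset_connectedComponentIn ⟨a, left_mem_Icc.2 hab, rfl⟩
    hU.image_subset ⟨b, right_mem_Icc.2 hab, rfl⟩

theorem of_mem_connectedComponentIn [T2Space T] {U : Set T}
    (hloc : ∀ p ∈ U, ∀ᶠ q in 𝓝 p, ArcJoined U p q) {p q : T}
    (hq : q ∈ connectedComponentIn U p) : ArcJoined U p q := by
  have hp : p ∈ U := connectedComponentIn_nonempty_iff.1 ⟨q, hq⟩
  exact isPreconnected_connectedComponentIn.induction₂ (ArcJoined U)
    (fun x hx => nhdsWithin_le_nhds (hloc x (connectedComponentIn_subset U p hx)))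
    (fun _ _ _ _ _ _ => trans) (fun _ _ _ _ => symm) (_root_.mem_connectedComponentIn hp) hq

end ArcJoined

theorem locallyConnectedSpace_of_eventually_arcJoined {T : Type*} [TopologicalSpace T]
    (h : ∀ U : Set T, IsOpen U → ∀ p ∈ U, ∀ᶠ q in 𝓝 p, ArcJoined U p q) :
    LocallyConnectedSpace T := by
  refine locallyConnectedSpace_iff_connectedComponentIn_open.2 fun U hU p _ =>
    isOpen_iff_mem_nhds.2 fun q hq => ?_
  filter_upwards [h U hU q (connectedComponentIn_subset U p hq)] with r hr
  exact connectedComponentIn_eq hq ▸ hr.mem_connectedComponentIn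

namespace IsTreeSpace

variable {T : Type*} [MetricSpace T]

theorem exists_finite_cover [Nontrivial T] (hT : IsTreeSpace T) :
    ∃ S : Set (ℝ → T), S.Finite ∧ (∀ η ∈ S, IsArcParam η 0 1) ∧
      ∀ x, ∃ η ∈ S, x ∈ η '' Icc 0 1 := by
  rcases hT.finiteArcs with ⟨x, hx⟩ | ⟨s, hs, hcover⟩
  · exact (nontrivial_univ.ne_singleton hx).elim
  have hparam : ∀ A ∈ s, ∃ γ, IsArcParam γ 0 1 ∧ γ '' Icc 0 1 = A := by
    intro A hA
    obtain ⟨e⟩ := hs A hA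
    obtain ⟨γ, hγ, hγA, -⟩ := IsArcParam.exists_of_homeomorph e
    exact ⟨γ, hγ, hγA⟩
  choose! γ hγ hγA using hparam
  refine ⟨γ '' s, s.finite_toSet.image γ, forall_mem_image.2 hγ, fun x => ?_⟩
  obtain ⟨A, hA, hx⟩ := mem_sUnion.1 (hcover ▸ mem_univ x)
  exact ⟨γ A, mem_image_of_mem γ hA, (hγA A hA).symm ▸ hx⟩

theorem notMem_branch_of_eventually_arcJoined (hT : IsTreeSpace T)
    (hloc : ∀ U : Set T, IsOpen U → ∀ p ∈ U, ∀ᶠ q in 𝓝 p, ArcJoined U p q)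
    {γ : ℝ → T} {a b s : ℝ} (hγ : IsArcParam γ a b) (hs : s ∈ Icc a b) :
    γ b ∉ branch (γ s) (γ a) := by
  intro hb
  have hab : a < b := by
    refine (hs.1.trans hs.2).lt_of_ne fun hab => ?_
    rw [show s = a from (hs.2.trans hab.ge).antisymm hs.1, ← hab] at hb
    exact self_notMem_branch hb
  obtain ⟨β, c, d, hcd, hβ, hβc, hβd, hβs⟩ :=
    ArcJoined.of_mem_connectedComponentIn (hloc _ isOpen_compl_singleton) hb
  have hne : γ a ≠ γ b := fun h =>
    hab.ne (hγ.injOn (left_mem_Icc.2 hab.le) (right_mem_Icc.2 hab.le) h)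
  have hcd' : c < d := hcd.lt_of_ne (by rintro rfl; exact hne (hβc.symm.trans hβd))
  have heq : β '' Icc c d = γ '' Icc a b := (hT.uniqueArc _ _ hne).unique
    (hβc ▸ hβd ▸ hβ.isArcBetween hcd') (hγ.isArcBetween hab)
  obtain ⟨t, ht, hts⟩ : γ s ∈ β '' Icc c d := heq ▸ mem_image_of_mem γ hs
  exact hβs ht hts

theorem finiteDendriteSpace [Nontrivial T] (hT : IsTreeSpace T) : FiniteDendriteSpace T := by
  obtain ⟨S, hSfin, hS, hcover⟩ := hT.exists_finite_cover
  have hloc : ∀ U : Set T, IsOpen U → ∀ p ∈ U, ∀ᶠ q in 𝓝 p, ArcJoined U p q :=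
    fun U hU p hp => eventually_arcJoined_of_finite_cover hSfin hS hcover hU hp
  have := hT.compact
  have := hT.conn
  have := locallyConnectedSpace_of_eventually_arcJoined hloc
  refine { exists_arc := fun x y hxy => ?_, exists_finite_cover := ⟨S, hSfin, hS, hcover⟩
           notMem_branch := hT.notMem_branch_of_eventually_arcJoined hloc }
  obtain ⟨A, ⟨e, h0, h1⟩, -⟩ := hT.uniqueArc x y hxy
  obtain ⟨γ, hγ, -, hγe⟩ := IsArcParam.exists_of_homeomorph e
  exact ⟨γ, hγ, (hγe 0 _).trans h0, (hγe 1 _).trans h1⟩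

end IsTreeSpace

/-- with no periodic cut-points, every subcontinuum is
asymptotically periodic. -/
theorem asympPeriodic_of_no_periodic_cut_point {T : Type*} [MetricSpace T]
    (hT : IsTreeSpace T) (f : T → T) (hf : Continuous f)
    (hcut : ∀ x : T, IsCut x → ∀ p : ℕ, 1 ≤ p → f^[p] x ≠ x) :
    ∀ A : Set T, IsSubcontinuum A → AsympPeriodic f A := by
  rintro A ⟨hne, hAc, hA⟩
  rcases subsingleton_or_nontrivial T with hsub | hnt
  · refine ⟨1, le_rfl, A, hne, hAc, tendsto_const_nhds.congr fun n => ?_⟩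
    rw [show f^[1 * n] = id from Subsingleton.elim _ _, image_id, hausdorffDist_self_zero]
  have := hT.finiteDendriteSpace
  obtain ⟨a, ha⟩ := exists_isCutAttractor hf fun x hx => hcut x hx 1 le_rfl
  obtain ⟨p, hp, hfixed⟩ := exists_common_period <|
    (finite_setOf_not_isCut (T := T)).subset fun x ⟨n, hn, hx⟩ hxcut => hcut x hxcut n hn hx
  have hper : ∀ x ∈ Function.periodicPts f^[p], f^[p] x = x := fun x ⟨m, hm, hx⟩ =>
    hfixed x ⟨p * m, Nat.mul_pos hp hm, by rwa [Function.IsPeriodicPt, Function.iterate_mul]⟩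
  have hatt : ∀ m, 1 ≤ m → IsCutAttractor (f^[p])^[m] a := fun m hm =>
    Function.iterate_mul f p m ▸ ha.iterate hf hcut (Nat.mul_pos hp hm)
  refine ⟨p, hp, ?_⟩
  simp only [Function.iterate_mul]
  exact exists_tendsto_hausdorffDist (fun n => hne.image _)
    (kLimsup_iterate_image_subset_kLiminf (hf.iterate p) hper hatt hAc hA.isPreconnected)
end
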